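/- arXiv:1903.08337 — 2 statements merged into one kernel-verified Lean document; each statement's English description precedes it below -/
import Mathlib

section
/- Every IC-planar graph G satisfies δ(G) ≤ 6; if additionally the girth of G is at least 4 then δ(G) ≤ 4; and if the girth is at least 5 then δ(G) ≤ 3. -/
open Set

/-- A drawing of a simple graph in the plane in which every edge is crossed at most once
and the clusters (four end-vertices) of distinct crossings are disjoint: an IC-plane drawing. -/
structure ICDrawing {V : Type*} (G : SimpleGraph V) where
  /-- position of each vertex -/
  pos : V → ℝ × ℝ
  pos_inj : Function.Injective pos
  /-- parametrized arc of each edge -/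
  arc : V → V → ℝ → ℝ × ℝ
  arc_symm : ∀ u v t, arc u v t = arc v u (1 - t)
  arc_cont : ∀ u v, G.Adj u v → ContinuousOn (arc u v) (Icc 0 1)
  arc_inj : ∀ u v, G.Adj u v → InjOn (arc u v) (Icc 0 1)
  arc_start : ∀ u v, G.Adj u v → arc u v 0 = pos u
  /-- the interior of an arc passes through no vertex -/
  arc_avoid : ∀ u v, G.Adj u v → ∀ t ∈ Ioo (0:ℝ) 1, ∀ w, arc u v t ≠ pos w
  /-- the interiors of two distinct edges meet in at most one point -/
  cross_subsingleton : ∀ u v x y, G.Adj u v → G.Adj x y → s(u, v) ≠ s(x, y) →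
    (arc u v '' Ioo 0 1 ∩ arc x y '' Ioo 0 1).Subsingleton
  /-- each edge is crossed by at most one other edge -/
  cross_unique : ∀ u v x y x' y', G.Adj u v → G.Adj x y → G.Adj x' y' →
    s(u, v) ≠ s(x, y) → s(u, v) ≠ s(x', y') →
    (arc u v '' Ioo 0 1 ∩ arc x y '' Ioo 0 1).Nonempty →
    (arc u v '' Ioo 0 1 ∩ arc x' y' '' Ioo 0 1).Nonempty →
    s(x, y) = s(x', y')
  /-- clusters of distinct crossings are disjoint -/
  ic : ∀ u v x y u' v' x' y', G.Adj u v → G.Adj x y → G.Adj u' v' → G.Adj x' y' →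
    s(u, v) ≠ s(x, y) → s(u', v') ≠ s(x', y') →
    (arc u v '' Ioo 0 1 ∩ arc x y '' Ioo 0 1).Nonempty →
    (arc u' v' '' Ioo 0 1 ∩ arc x' y' '' Ioo 0 1).Nonempty →
    ({s(u, v), s(x, y)} : Set (Sym2 V)) ≠ {s(u', v'), s(x', y')} →
    ({u, v, x, y} : Set V) ∩ {u', v', x', y'} = ∅

/-- A graph is IC-planar if it admits an IC-plane drawing. -/
def SimpleGraph.ICPlanar {V : Type*} (G : SimpleGraph V) : Prop :=
  Nonempty (ICDrawing G)

/-!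
The cycle space of a graph has a 2-basis if it is spanned by vectors covering every edge at most
twice (MacLane). The unit squares are a 2-basis of the infinite grid, and 2-bases pass to minors.
Drawing a plane graph on a fine enough grid exhibits it as a minor of the grid, so its cycle space
has a 2-basis; the support of a cycle vector has at least as many edges as the girth, and counting
incidences of edges with basis vectors bounds the number of edges as Euler's formula does. In an
IC-plane drawing one edge can be deleted from every crossing, and the crossings, having disjoint
clusters, are few.
-/

section TwoBasis

/-- A submodule of `𝔽₂`-chains on `E` has a *2-basis*, in the sense of MacLane's planarity
criterion, if it is spanned by chains that use every element of `E` at most twice altogether.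
Linear independence of the spanning chains is not required. -/
def HasTwoBasis {E : Type*} (S : Submodule (ZMod 2) (E →₀ ZMod 2)) : Prop :=
  ∃ B : Set (E →₀ ZMod 2), Submodule.span (ZMod 2) B = S ∧ ∀ e, {b ∈ B | b e ≠ 0}.encard ≤ 2

lemma map_mem_of_forall_single {R M E : Type*} [Semiring R] [AddCommMonoid M] [Module R M]
    {L : (E →₀ R) →ₗ[R] M} {S : Submodule R M} {z : E →₀ R}
    (h : ∀ e ∈ z.support, L (Finsupp.single e 1) ∈ S) : L z ∈ S := by
  rw [← z.sum_single, Finsupp.sum, map_sum]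
  refine S.sum_mem fun e he => ?_
  rw [← mul_one (z e), ← smul_eq_mul, ← Finsupp.smul_single, map_smul]
  exact S.smul_mem _ (h e he)

lemma map_eq_of_forall_single {R M E : Type*} [Semiring R] [AddCommMonoid M] [Module R M]
    {L L' : (E →₀ R) →ₗ[R] M} {z : E →₀ R}
    (h : ∀ e ∈ z.support, L (Finsupp.single e 1) = L' (Finsupp.single e 1)) : L z = L' z :=
  map_mem_of_forall_single (L := LinearMap.id) (S := L.eqLocus L') h

namespace HasTwoBasis

variable {E : Type*} {S : Submodule (ZMod 2) (E →₀ ZMod 2)}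

-- Adding `a` to every member through `e` kills `a` itself; if `a` also uses `f`, an image using `f`
-- comes from another member through `e` or through `f`, and there is at most one of each.
lemma encard_eliminate_le {B : Set (E →₀ ZMod 2)} (hB : ∀ f, {b ∈ B | b f ≠ 0}.encard ≤ 2)
    {a : E →₀ ZMod 2} (haB : a ∈ B) {e : E} (hae : a e = 1) (f : E) :
    {b ∈ (fun z : E →₀ ZMod 2 => z + z e • a) '' B | b f ≠ 0}.encard ≤ 2 := by
  set ρ : (E →₀ ZMod 2) → (E →₀ ZMod 2) := fun z => z + z e • a with hρ
  by_cases haf : a f = 0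
  · have hsub : {b ∈ ρ '' B | b f ≠ 0} ⊆ ρ '' {b ∈ B | b f ≠ 0} := by
      rintro _ ⟨⟨b, hb, rfl⟩, hbf⟩
      exact ⟨b, ⟨hb, by simpa [hρ, haf] using hbf⟩, rfl⟩
    exact (encard_le_encard hsub).trans ((encard_image_le _ _).trans (hB f))
  · have hsub : {b ∈ ρ '' B | b f ≠ 0} ⊆
        ρ '' (({b ∈ B | b f ≠ 0} \ {a}) ∪ ({b ∈ B | b e ≠ 0} \ {a})) := by
      rintro _ ⟨⟨b, hb, rfl⟩, hbf⟩
      have hba : b ≠ a := by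
        rintro rfl
        exact hbf (by simp [hρ, hae, ZModModule.add_self])
      refine ⟨b, ?_, rfl⟩
      by_cases hbe : b e = 0
      · exact Or.inl ⟨⟨hb, by simpa [hρ, hbe] using hbf⟩, hba⟩
      · exact Or.inr ⟨⟨hb, hbe⟩, hba⟩
    have erase_le (g : E) (hag : a g ≠ 0) : ({b ∈ B | b g ≠ 0} \ {a}).encard ≤ 1 := by
      rw [encard_sdiff_singleton_of_mem (show a ∈ {b ∈ B | b g ≠ 0} from ⟨haB, hag⟩)]
      exact tsub_le_iff_right.2 (by simpa [one_add_one_eq_two] using hB g)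
    calc {b ∈ ρ '' B | b f ≠ 0}.encard
        ≤ (({b ∈ B | b f ≠ 0} \ {a}) ∪ ({b ∈ B | b e ≠ 0} \ {a})).encard :=
          (encard_le_encard hsub).trans (encard_image_le _ _)
      _ ≤ 1 + 1 := (encard_union_le _ _).trans
          (add_le_add (erase_le f haf) (erase_le e (by simp [hae])))
      _ = 2 := one_add_one_eq_two

lemma inf_ker_lapply (h : HasTwoBasis S) (e : E) :
    HasTwoBasis (S ⊓ LinearMap.ker (Finsupp.lapply (R := ZMod 2) e)) := by
  obtain ⟨B, rfl, hB⟩ := h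
  by_cases hne : ∃ a ∈ B, a e ≠ 0
  · obtain ⟨a, haB, hae⟩ := hne
    have hae : a e = 1 := Fin.eq_one_of_ne_zero _ hae
    let ρ : (E →₀ ZMod 2) →ₗ[ZMod 2] (E →₀ ZMod 2) :=
      LinearMap.id + (Finsupp.lapply (R := ZMod 2) e).smulRight a
    have hρ (z) : ρ z = z + z e • a := rfl
    refine ⟨ρ '' B, ?_, encard_eliminate_le hB haB hae⟩
    rw [Submodule.span_image]
    refine le_antisymm ?_ fun z hz => ⟨z, hz.1, by rw [hρ, show z e = 0 from hz.2]; simp⟩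
    rintro _ ⟨z, hz, rfl⟩
    refine ⟨add_mem hz (Submodule.smul_mem _ _ (Submodule.subset_span haB)), ?_⟩
    simp [hρ, hae, ZModModule.add_self]
  · push Not at hne
    exact ⟨B, (inf_eq_left.2 (Submodule.span_le.2 fun b hb => hne b hb)).symm, hB⟩

lemma inf_supported_compl (h : HasTwoBasis S) (D : Finset E) :
    HasTwoBasis (S ⊓ Finsupp.supported (ZMod 2) (ZMod 2) (D : Set E)ᶜ) := by
  classical
  induction D using Finset.induction_on with
  | empty => simpa using h
  | insert e D _ ih =>
    convert ih.inf_ker_lapply e using 1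
    ext z
    simp only [Submodule.mem_inf, Finsupp.mem_supported', LinearMap.mem_ker,
      Finsupp.lapply_apply, notMem_compl_iff, Finset.mem_coe, Finset.mem_insert,
      forall_eq_or_imp]
    tauto

lemma inf_supported (h : HasTwoBasis S) (hS : S.FG) (X : Set E) :
    HasTwoBasis (S ⊓ Finsupp.supported (ZMod 2) (ZMod 2) X) := by
  classical
  obtain ⟨t, rfl⟩ := hS
  let U : Finset E := t.biUnion Finsupp.support
  have hU : Submodule.span (ZMod 2) (t : Set (E →₀ ZMod 2)) ≤
      Finsupp.supported (ZMod 2) (ZMod 2) (U : Set E) :=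
    Submodule.span_le.2 fun b hb => Finset.subset_biUnion_of_mem Finsupp.support hb
  convert h.inf_supported_compl {e ∈ U | e ∉ X} using 1
  ext z
  refine and_congr_right fun hz => ?_
  have hzU := hU hz
  simp only [Finsupp.mem_supported, subset_def, Finset.mem_coe] at hzU ⊢
  refine forall₂_congr fun e he => ?_
  simp [hzU e he]

lemma exists_fg_le (h : HasTwoBasis S) (F : Finset (E →₀ ZMod 2))
    (hF : (F : Set (E →₀ ZMod 2)) ⊆ S) :
    ∃ S₀ ≤ S, S₀.FG ∧ HasTwoBasis S₀ ∧ (F : Set (E →₀ ZMod 2)) ⊆ S₀ := by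
  obtain ⟨B, rfl, hB⟩ := h
  obtain ⟨B₀, hB₀, hFB₀⟩ := Submodule.subset_span_finite_of_subset_span hF
  refine ⟨Submodule.span (ZMod 2) B₀, Submodule.span_mono hB₀, ⟨B₀, rfl⟩, ⟨B₀, rfl, fun e => ?_⟩,
    hFB₀⟩
  refine (encard_le_encard ?_).trans (hB e)
  exact fun b hb => ⟨hB₀ hb.1, hb.2⟩

lemma map_lcomapDomain {E' : Type*} (h : HasTwoBasis S) {ε : E' → E} (hε : ε.Injective) :
    HasTwoBasis (S.map (Finsupp.lcomapDomain (R := ZMod 2) ε hε)) := by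
  obtain ⟨B, rfl, hB⟩ := h
  refine ⟨_, Submodule.span_image _, fun e => ?_⟩
  have hsub : {b ∈ Finsupp.lcomapDomain (R := ZMod 2) ε hε '' B | b e ≠ 0} ⊆
      Finsupp.lcomapDomain (R := ZMod 2) ε hε '' {b ∈ B | b (ε e) ≠ 0} := by
    rintro _ ⟨⟨b, hb, rfl⟩, hbe⟩
    exact ⟨b, ⟨hb, hbe⟩, rfl⟩
  exact (encard_le_encard hsub).trans ((encard_image_le _ _).trans (hB _))

lemma map_lcomapDomain_inf_supported {E' : Type*} [Finite E'] (h : HasTwoBasis S) {ε : E' → E}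
    (hε : ε.Injective) (X : Set E) :
    HasTwoBasis ((S ⊓ Finsupp.supported (ZMod 2) (ZMod 2) X).map
      (Finsupp.lcomapDomain (R := ZMod 2) ε hε)) := by
  classical
  set q := Finsupp.lcomapDomain (R := ZMod 2) (M := ZMod 2) ε hε
  obtain ⟨t, ht⟩ := IsNoetherian.noetherian
    ((S ⊓ Finsupp.supported (ZMod 2) (ZMod 2) X).map q)
  have ht' : (t : Set _) ⊆ q '' (S ⊓ Finsupp.supported (ZMod 2) (ZMod 2) X : Submodule _ _) := by
    rw [← Submodule.map_coe, ← ht]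
    exact Submodule.subset_span
  obtain ⟨F, hF, rfl⟩ := Finset.subset_set_image_iff.1 ht'
  obtain ⟨S₀, hS₀, hfg, hbasis, hFS₀⟩ := h.exists_fg_le F fun z hz => (hF hz).1
  convert (hbasis.inf_supported hfg X).map_lcomapDomain hε using 1
  refine le_antisymm ?_ (Submodule.map_mono (inf_le_inf_right _ hS₀))
  rw [← ht, Finset.coe_image, Submodule.span_image]
  exact Submodule.map_mono (Submodule.span_le.2 fun z hz => ⟨hFS₀ hz, (hF hz).2⟩)

lemma finrank_mul_le [Finite E] (h : HasTwoBasis S) {g : ℕ}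
    (hg : ∀ z ∈ S, z ≠ 0 → g ≤ z.support.card) :
    Module.finrank (ZMod 2) S * g ≤ 2 * Nat.card E := by
  classical
  have := Fintype.ofFinite E
  obtain ⟨B, rfl, hB⟩ := h
  let P : Finset (E →₀ ZMod 2) := (B \ {0}).toFinite.toFinset
  have hP {b} : b ∈ P ↔ b ∈ B ∧ b ≠ 0 := by simp [P]
  have hfinrank : Module.finrank (ZMod 2) (Submodule.span (ZMod 2) B) ≤ P.card := by
    rw [← Submodule.span_sdiff_singleton_zero, ← (B \ {0}).toFinite.coe_toFinset]
    exact finrank_span_finset_le_card P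
  have hdouble : P.card * g ≤ (Finset.univ : Finset E).card * 2 := by
    refine Finset.card_mul_le_card_mul (fun b e => b e ≠ 0) (fun b hb => ?_) fun e _ => ?_
    · convert hg b (Submodule.subset_span (hP.1 hb).1) (hP.1 hb).2 using 2
      ext e
      simp [Finset.mem_bipartiteAbove]
    · rw [← Nat.cast_le (α := ℕ∞), ← encard_coe_eq_coe_finsetCard]
      refine (encard_le_encard fun b hb => ?_).trans (hB e)
      obtain ⟨hbP, hbe⟩ := (Finset.mem_bipartiteBelow _).1 hb
      exact ⟨(hP.1 hbP).1, hbe⟩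
  calc Module.finrank (ZMod 2) (Submodule.span (ZMod 2) B) * g ≤ P.card * g :=
        Nat.mul_le_mul_right g hfinrank
    _ ≤ 2 * Nat.card E := by rwa [mul_comm 2, Nat.card_eq_fintype_card]

end HasTwoBasis

end TwoBasis

section CycleSpace

variable {V : Type*}

/-- The mod 2 boundary map of a graph, sending an edge to the sum of its two ends. -/
noncomputable def graphBoundary (G : SimpleGraph V) :
    (G.edgeSet →₀ ZMod 2) →ₗ[ZMod 2] (V →₀ ZMod 2) :=
  Finsupp.linearCombination (ZMod 2) fun e =>
    e.1.lift ⟨fun x y => Finsupp.single x 1 + Finsupp.single y 1, fun _ _ => add_comm _ _⟩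

/-- The binary cycle space of a graph: the finite edge sets meeting every vertex evenly. -/
noncomputable def cycleSpace (G : SimpleGraph V) : Submodule (ZMod 2) (G.edgeSet →₀ ZMod 2) :=
  LinearMap.ker (graphBoundary G)

lemma graphBoundary_single {G : SimpleGraph V} {x y : V} (h : G.Adj x y) :
    graphBoundary G (Finsupp.single ⟨s(x, y), h⟩ 1) =
      Finsupp.single x 1 + Finsupp.single y 1 := by
  simp [graphBoundary]

lemma card_edgeSet_add_one_le_finrank_cycleSpace_add [Finite V] [Nonempty V]
    (G : SimpleGraph V) :
    Nat.card G.edgeSet + 1 ≤ Module.finrank (ZMod 2) (cycleSpace G) + Nat.card V := by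
  classical
  have := Fintype.ofFinite V
  let augmentation : (V →₀ ZMod 2) →ₗ[ZMod 2] ZMod 2 :=
    Finsupp.linearCombination (ZMod 2) fun _ => 1
  have haug (x : V) : augmentation (Finsupp.single x 1) = 1 := by simp [augmentation]
  have hsurj : LinearMap.range augmentation = ⊤ :=
    LinearMap.range_eq_top.2 fun c => ⟨Finsupp.single (Classical.arbitrary V) c, by
      simp [augmentation]⟩
  have hle : LinearMap.range (graphBoundary G) ≤ LinearMap.ker augmentation := by
    rintro _ ⟨z, rfl⟩
    rw [LinearMap.mem_ker, ← LinearMap.comp_apply,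
      map_eq_of_forall_single (L := augmentation ∘ₗ graphBoundary G) (L' := 0),
      LinearMap.zero_apply]
    rintro ⟨⟨x, y⟩, hxy⟩ -
    rw [LinearMap.comp_apply, graphBoundary_single hxy, map_add, haug, haug, ZModModule.add_self,
      LinearMap.zero_apply]
  have hedges := (graphBoundary G).finrank_range_add_finrank_ker
  have hverts := augmentation.finrank_range_add_finrank_ker
  rw [hsurj, finrank_top, Module.finrank_self, Module.finrank_finsupp_self,
    ← Nat.card_eq_fintype_card] at hverts
  rw [Module.finrank_finsupp_self, ← Nat.card_eq_fintype_card] at hedges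
  have := Submodule.finrank_mono hle
  unfold cycleSpace
  omega

/-- The graph formed by the edges in the support of a mod 2 chain. -/
def supportGraph {G : SimpleGraph V} (z : G.edgeSet →₀ ZMod 2) : SimpleGraph V :=
  SimpleGraph.fromEdgeSet (Subtype.val '' (z.support : Set G.edgeSet))

lemma edgeSet_supportGraph {G : SimpleGraph V} (z : G.edgeSet →₀ ZMod 2) :
    (supportGraph z).edgeSet = Subtype.val '' (z.support : Set G.edgeSet) := by
  rw [supportGraph, SimpleGraph.edgeSet_fromEdgeSet, sdiff_eq_left, Set.disjoint_left]
  rintro _ ⟨e, -, rfl⟩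
  exact G.not_isDiag_of_mem_edgeSet e.2

lemma not_isBridge_supportGraph {G : SimpleGraph V} {z : G.edgeSet →₀ ZMod 2}
    (hz : z ∈ cycleSpace G) {e : Sym2 V} (he : e ∈ (supportGraph z).edgeSet) :
    ¬ (supportGraph z).IsBridge e := by
  classical
  induction e with | h u v
  rw [edgeSet_supportGraph] at he
  obtain ⟨⟨_, huv⟩, he, rfl⟩ := he
  rw [SimpleGraph.isBridge_iff]
  intro hbridge
  set D := (supportGraph z).deleteEdges {s(u, v)}
  let side : (V →₀ ZMod 2) →ₗ[ZMod 2] ZMod 2 :=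
    Finsupp.linearCombination (ZMod 2) fun x => if D.Reachable u x then 1 else 0
  have hside : side (graphBoundary G z) = z ⟨s(u, v), huv⟩ := by
    refine map_eq_of_forall_single (L := side ∘ₗ graphBoundary G) (L' := Finsupp.lapply _) ?_
    rintro ⟨⟨x, y⟩, hxy⟩ hf
    rw [LinearMap.comp_apply, Finsupp.lapply_apply]
    by_cases heq : (⟨s(x, y), hxy⟩ : G.edgeSet) = ⟨s(u, v), huv⟩
    · rw [show (⟨Quot.mk _ (x, y), hxy⟩ : G.edgeSet) = ⟨s(u, v), huv⟩ from heq,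
        graphBoundary_single huv, map_add, Finsupp.single_eq_same]
      simp [side, D, hbridge]
    · have hadj : D.Adj x y := by
        rw [← SimpleGraph.mem_edgeSet, SimpleGraph.edgeSet_deleteEdges, edgeSet_supportGraph]
        exact ⟨⟨_, hf, rfl⟩, fun h => heq (Subtype.ext h)⟩
      have hreach : D.Reachable u x ↔ D.Reachable u y :=
        ⟨fun h => h.trans hadj.reachable, fun h => h.trans hadj.reachable.symm⟩
      rw [graphBoundary_single hxy, map_add, Finsupp.single_eq_of_ne' heq]
      simp [side, hreach, ZModModule.add_self]
  rw [show graphBoundary G z = 0 from hz, map_zero] at hside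
  exact Finsupp.mem_support_iff.1 he hside.symm

lemma le_card_support_of_mem_cycleSpace {G : SimpleGraph V} {g : ℕ} (hg : g ≤ G.egirth)
    {z : G.edgeSet →₀ ZMod 2} (hz : z ∈ cycleSpace G) (hz0 : z ≠ 0) : g ≤ z.support.card := by
  classical
  have hnot : ¬ (supportGraph z).IsAcyclic := by
    rw [SimpleGraph.isAcyclic_iff_forall_isBridge]
    obtain ⟨e, he⟩ := Finsupp.support_nonempty_iff.2 hz0
    have he' : e.1 ∈ (supportGraph z).edgeSet := edgeSet_supportGraph z ▸ mem_image_of_mem _ he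
    exact fun h => not_isBridge_supportGraph hz he' (h he')
  simp only [SimpleGraph.IsAcyclic, not_forall, not_not] at hnot
  obtain ⟨v, c, hc⟩ := hnot
  have hle : supportGraph z ≤ G := by
    rw [← SimpleGraph.edgeSet_subset_edgeSet, edgeSet_supportGraph]
    exact Subtype.coe_image_subset _ _
  have hedges : c.edges.toFinset ⊆ z.support.image Subtype.val := by
    rw [← Finset.coe_subset, Finset.coe_image, ← edgeSet_supportGraph, List.coe_toFinset]
    exact c.edges_subset_edgeSet
  rw [← Nat.cast_le (α := ℕ∞)]
  calc (g : ℕ∞) ≤ (supportGraph z).egirth := hg.trans (SimpleGraph.egirth_anti hle)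
    _ ≤ c.length := SimpleGraph.egirth_le_length hc
    _ = c.edges.toFinset.card := by
      rw [List.toFinset_card_of_nodup hc.edges_nodup, c.length_edges]
    _ ≤ z.support.card := mod_cast (Finset.card_le_card hedges).trans Finset.card_image_le

lemma HasTwoBasis.mul_card_edgeSet_add_le [Finite V] [Nonempty V] {G : SimpleGraph V}
    (h : HasTwoBasis (cycleSpace G)) {k : ℕ} (hg : ((k + 2 : ℕ) : ℕ∞) ≤ G.egirth) :
    k * Nat.card G.edgeSet + (k + 2) ≤ (k + 2) * Nat.card V := by
  have hcount := h.finrank_mul_le fun z hz hz0 => le_card_support_of_mem_cycleSpace hg hz hz0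
  have hdim := Nat.mul_le_mul_right (k + 2) (card_edgeSet_add_one_le_finrank_cycleSpace_add G)
  linarith

end CycleSpace

section Minors

variable {V W : Type*}

/-- A model of `H` as a minor of `Γ`: pairwise disjoint connected branch sets of vertices of `Γ`,
one for each vertex of `H`, with an edge of `Γ` between the branch sets of adjacent vertices. -/
structure MinorModel (H : SimpleGraph V) (Γ : SimpleGraph W) where
  branch : V → Set W
  branch_connected : ∀ v, (Γ.induce (branch v)).Connected
  branch_disjoint : Pairwise fun u v => Disjoint (branch u) (branch v)
  exists_adj : ∀ u v, H.Adj u v → ∃ x ∈ branch u, ∃ y ∈ branch v, Γ.Adj x y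

namespace MinorModel

variable {H : SimpleGraph V} {Γ : SimpleGraph W} (M : MinorModel H Γ)

lemma eq_of_mem_branch {u v : V} {x : W} (hu : x ∈ M.branch u) (hv : x ∈ M.branch v) : u = v :=
  M.branch_disjoint.eq (not_disjoint_iff.2 ⟨x, hu, hv⟩)

lemma exists_edge (e : H.edgeSet) : ∃ f : Γ.edgeSet, ∃ u v x y, ∃ (huv : H.Adj u v)
    (hxy : Γ.Adj x y), e = ⟨s(u, v), huv⟩ ∧ f = ⟨s(x, y), hxy⟩ ∧
      x ∈ M.branch u ∧ y ∈ M.branch v := by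
  obtain ⟨⟨u, v⟩, huv⟩ := e
  obtain ⟨x, hx, y, hy, hxy⟩ := M.exists_adj u v huv
  exact ⟨⟨s(x, y), hxy⟩, u, v, x, y, huv, hxy, rfl, rfl, hx, hy⟩

/-- An edge of `Γ` joining the branch sets of the two ends of an edge of `H`. -/
noncomputable def linkEdge (e : H.edgeSet) : Γ.edgeSet := (M.exists_edge e).choose

lemma linkEdge_spec (e : H.edgeSet) : ∃ u v x y, ∃ (huv : H.Adj u v) (hxy : Γ.Adj x y),
    e = ⟨s(u, v), huv⟩ ∧ M.linkEdge e = ⟨s(x, y), hxy⟩ ∧ x ∈ M.branch u ∧ y ∈ M.branch v :=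
  (M.exists_edge e).choose_spec

lemma linkEdge_injective : M.linkEdge.Injective := by
  intro e e' h
  obtain ⟨u, v, x, y, huv, hxy, rfl, hl, hx, hy⟩ := M.linkEdge_spec e
  obtain ⟨u', v', x', y', huv', hxy', rfl, hl', hx', hy'⟩ := M.linkEdge_spec e'
  rw [hl, hl'] at h
  refine Subtype.ext (Sym2.eq_iff.2 ?_)
  obtain ⟨rfl, rfl⟩ | ⟨rfl, rfl⟩ := Sym2.eq_iff.1 (congrArg Subtype.val h)
  · exact Or.inl ⟨M.eq_of_mem_branch hx hx', M.eq_of_mem_branch hy hy'⟩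
  · exact Or.inr ⟨M.eq_of_mem_branch hx hy', M.eq_of_mem_branch hy hx'⟩

/-- The edges of `Γ` inside the branch sets, which are contracted in forming `H`. -/
def contractedEdges : Set Γ.edgeSet :=
  {f | ∃ v, ∃ x ∈ M.branch v, ∃ y ∈ M.branch v, ∃ hxy : Γ.Adj x y, f = ⟨s(x, y), hxy⟩}

lemma linkEdge_notMem_contractedEdges (e : H.edgeSet) : M.linkEdge e ∉ M.contractedEdges := by
  rintro ⟨w, a, ha, b, hb, hab, hf⟩
  obtain ⟨u, v, x, y, huv, hxy, -, hl, hx, hy⟩ := M.linkEdge_spec e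
  refine huv.ne ?_
  obtain ⟨rfl, rfl⟩ | ⟨rfl, rfl⟩ := Sym2.eq_iff.1 (congrArg Subtype.val (hl.symm.trans hf))
  · exact (M.eq_of_mem_branch hx ha).trans (M.eq_of_mem_branch hy hb).symm
  · exact (M.eq_of_mem_branch hx hb).trans (M.eq_of_mem_branch hy ha).symm

/-- The map on edge chains that keeps exactly the edges of `Γ` representing edges of `H`. -/
noncomputable def restrict : (Γ.edgeSet →₀ ZMod 2) →ₗ[ZMod 2] (H.edgeSet →₀ ZMod 2) :=
  Finsupp.lcomapDomain M.linkEdge M.linkEdge_injective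

lemma restrict_mapDomain (z : H.edgeSet →₀ ZMod 2) :
    M.restrict (Finsupp.mapDomain M.linkEdge z) = z :=
  Finsupp.comapDomain_mapDomain _ M.linkEdge_injective z

lemma restrict_eq_zero {z : Γ.edgeSet →₀ ZMod 2}
    (hz : z ∈ Finsupp.supported (ZMod 2) (ZMod 2) M.contractedEdges) : M.restrict z = 0 :=
  Finsupp.ext fun e => (Finsupp.mem_supported' _ z).1 hz _ (M.linkEdge_notMem_contractedEdges e)

open Classical in
/-- The map on vertex chains that contracts every branch set to its vertex of `H` and forgets the
vertices of `Γ` outside the branch sets. -/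
noncomputable def contract : (W →₀ ZMod 2) →ₗ[ZMod 2] (V →₀ ZMod 2) :=
  Finsupp.linearCombination (ZMod 2) fun x =>
    if h : ∃ v, x ∈ M.branch v then Finsupp.single h.choose 1 else 0

lemma contract_single {v : V} {x : W} (hx : x ∈ M.branch v) :
    M.contract (Finsupp.single x 1) = Finsupp.single v 1 := by
  have h : ∃ v, x ∈ M.branch v := ⟨v, hx⟩
  rw [contract, Finsupp.linearCombination_single, one_smul, dif_pos h,
    M.eq_of_mem_branch h.choose_spec hx]

lemma contract_graphBoundary {z : Γ.edgeSet →₀ ZMod 2}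
    (hz : z ∈ Finsupp.supported (ZMod 2) (ZMod 2) (M.contractedEdges ∪ range M.linkEdge)) :
    M.contract (graphBoundary Γ z) = graphBoundary H (M.restrict z) := by
  refine map_eq_of_forall_single (L := M.contract ∘ₗ graphBoundary Γ)
    (L' := graphBoundary H ∘ₗ M.restrict) fun f hf => ?_
  simp only [LinearMap.comp_apply]
  obtain hf | ⟨e, rfl⟩ := hz hf
  · rw [M.restrict_eq_zero (Finsupp.single_mem_supported _ _ hf), map_zero]
    obtain ⟨v, x, hx, y, hy, hxy, rfl⟩ := hf
    rw [graphBoundary_single, map_add, M.contract_single hx, M.contract_single hy,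
      ZModModule.add_self]
  · rw [← Finsupp.mapDomain_single, restrict_mapDomain, Finsupp.mapDomain_single]
    obtain ⟨u, v, x, y, huv, hxy, rfl, hl, hx, hy⟩ := M.linkEdge_spec e
    rw [hl, graphBoundary_single, graphBoundary_single, map_add, M.contract_single hx,
      M.contract_single hy]

lemma single_add_single_mem_map_graphBoundary {v : V} {x y : W} (hx : x ∈ M.branch v)
    (hy : y ∈ M.branch v) :
    (Finsupp.single x 1 + Finsupp.single y 1 : W →₀ ZMod 2) ∈
      (Finsupp.supported (ZMod 2) (ZMod 2) M.contractedEdges).map (graphBoundary Γ) := by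
  obtain ⟨p⟩ := (M.branch_connected v).preconnected ⟨x, hx⟩ ⟨y, hy⟩
  set T := (Finsupp.supported (ZMod 2) (ZMod 2) M.contractedEdges).map (graphBoundary Γ)
  suffices h : ∀ {a b : M.branch v}, (Γ.induce (M.branch v)).Walk a b →
      (Finsupp.single a.1 1 + Finsupp.single b.1 1 : W →₀ ZMod 2) ∈ T from h p
  intro a b p
  induction p with
  | nil =>
    rw [ZModModule.add_self]
    exact zero_mem _
  | @cons a b c hab _ ih =>
    have hab : Γ.Adj a b := hab
    rw [← ZModModule.add_add_add_cancel _ (Finsupp.single b.1 1)]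
    exact add_mem ⟨_, Finsupp.single_mem_supported _ _ ⟨v, a, a.2, b, b.2, hab, rfl⟩,
      graphBoundary_single hab⟩ ih

lemma exists_mem_cycleSpace_restrict_eq {z : H.edgeSet →₀ ZMod 2} (hz : z ∈ cycleSpace H) :
    ∃ w ∈ cycleSpace Γ ⊓
      Finsupp.supported (ZMod 2) (ZMod 2) (M.contractedEdges ∪ range M.linkEdge),
      M.restrict w = z := by
  let center (v : V) : W := (M.branch_connected v).nonempty.some
  have hcenter (v : V) : center v ∈ M.branch v := (M.branch_connected v).nonempty.some.2
  let lift := Finsupp.lmapDomain (ZMod 2) (ZMod 2) M.linkEdge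
  let centerMap := Finsupp.lmapDomain (ZMod 2) (ZMod 2) center
  have hmem : graphBoundary Γ (lift z) + centerMap (graphBoundary H z) ∈
      (Finsupp.supported (ZMod 2) (ZMod 2) M.contractedEdges).map (graphBoundary Γ) := by
    refine map_mem_of_forall_single
      (L := graphBoundary Γ ∘ₗ lift + centerMap ∘ₗ graphBoundary H) fun e _ => ?_
    obtain ⟨u, v, x, y, huv, hxy, rfl, hl, hx, hy⟩ := M.linkEdge_spec e
    simp only [LinearMap.add_apply, LinearMap.comp_apply, lift, centerMap,
      Finsupp.lmapDomain_apply, Finsupp.mapDomain_single, hl, graphBoundary_single,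
      Finsupp.mapDomain_add]
    rw [add_add_add_comm]
    exact add_mem (M.single_add_single_mem_map_graphBoundary hx (hcenter u))
      (M.single_add_single_mem_map_graphBoundary hy (hcenter v))
  rw [show graphBoundary H z = 0 from hz, map_zero, add_zero] at hmem
  obtain ⟨i, hi, hboundary⟩ := hmem
  have hlift : lift z ∈ Finsupp.supported (ZMod 2) (ZMod 2) (range M.linkEdge) :=
    map_mem_of_forall_single fun e _ => by
      rw [Finsupp.lmapDomain_apply, Finsupp.mapDomain_single]
      exact Finsupp.single_mem_supported _ _ ⟨e, rfl⟩
  refine ⟨lift z + i, ⟨?_, add_mem ?_ ?_⟩, ?_⟩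
  · rw [cycleSpace, SetLike.mem_coe, LinearMap.mem_ker, map_add, hboundary, ZModModule.add_self]
  · exact Finsupp.supported_mono subset_union_right hlift
  · exact Finsupp.supported_mono subset_union_left hi
  · rw [map_add, M.restrict_eq_zero hi, add_zero]
    exact M.restrict_mapDomain z

lemma map_restrict_cycleSpace :
    (cycleSpace Γ ⊓ Finsupp.supported (ZMod 2) (ZMod 2)
      (M.contractedEdges ∪ range M.linkEdge)).map M.restrict = cycleSpace H := by
  refine le_antisymm ?_ fun z hz => M.exists_mem_cycleSpace_restrict_eq hz
  rintro _ ⟨z, ⟨hz, hsupp⟩, rfl⟩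
  rw [cycleSpace, LinearMap.mem_ker, ← M.contract_graphBoundary hsupp,
    show graphBoundary Γ z = 0 from hz, map_zero]

end MinorModel

lemma HasTwoBasis.of_minorModel [Finite V] {H : SimpleGraph V} {Γ : SimpleGraph W}
    (h : HasTwoBasis (cycleSpace Γ)) (M : MinorModel H Γ) : HasTwoBasis (cycleSpace H) := by
  rw [← M.map_restrict_cycleSpace]
  exact h.map_lcomapDomain_inf_supported M.linkEdge_injective _

end Minors

section Grid

lemma exists_add_map_add_one_eq {M : Type*} [AddCommGroup M] [Module (ZMod 2) M] (f : ℤ → M) :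
    ∃ F : ℤ → M, F 0 = 0 ∧ ∀ n, F n + F (n + 1) = f n := by
  refine ⟨fun n => ∑ k ∈ Finset.Ico (min 0 n) (max 0 n), f k, by simp, fun n => ?_⟩
  obtain hn | hn := le_or_gt 0 n
  · simp only [min_eq_left hn, max_eq_right hn, min_eq_left (Int.le_add_one hn),
      max_eq_right (Int.le_add_one hn), ← Finset.insert_Ico_right_eq_Ico_add_one hn,
      Finset.sum_insert Finset.right_notMem_Ico]
    rw [add_left_comm, ZModModule.add_self, add_zero]
  · simp only [min_eq_right hn.le, max_eq_left hn.le, min_eq_right (Int.add_one_le_iff.2 hn),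
      max_eq_left (Int.add_one_le_iff.2 hn), ← Finset.insert_Ico_add_one_left_eq_Ico hn]
    rw [Finset.sum_insert (by simp), add_assoc, ZModModule.add_self, add_zero]

/-- The square grid on `ℤ × ℤ`. -/
noncomputable def intGrid : SimpleGraph (ℤ × ℤ) := SimpleGraph.hasse ℤ □ SimpleGraph.hasse ℤ

namespace intGrid

lemma adj_iff {x y : ℤ × ℤ} : intGrid.Adj x y ↔
    (y.1 = x.1 + 1 ∨ x.1 = y.1 + 1) ∧ x.2 = y.2 ∨ (y.2 = x.2 + 1 ∨ x.2 = y.2 + 1) ∧ x.1 = y.1 := by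
  simp only [intGrid, SimpleGraph.boxProd_adj, SimpleGraph.hasse_adj, Order.covBy_iff_add_one_eq,
    eq_comm]

/-- The grid edge from `(i, j)` to `(i + 1, j)`. -/
def horizontal (i j : ℤ) : intGrid.edgeSet := ⟨s((i, j), (i + 1, j)), by simp [adj_iff]⟩

/-- The grid edge from `(i, j)` to `(i, j + 1)`. -/
def vertical (i j : ℤ) : intGrid.edgeSet := ⟨s((i, j), (i, j + 1)), by simp [adj_iff]⟩

lemma eq_horizontal_or_eq_vertical (e : intGrid.edgeSet) :
    (∃ i j, e = horizontal i j) ∨ ∃ i j, e = vertical i j := by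
  obtain ⟨⟨⟨i, j⟩, ⟨k, l⟩⟩, h⟩ := e
  have hadj : (k = i + 1 ∨ i = k + 1) ∧ j = l ∨ (l = j + 1 ∨ j = l + 1) ∧ i = k := adj_iff.1 h
  obtain ⟨rfl | rfl, rfl⟩ | ⟨rfl | rfl, rfl⟩ := hadj
  · exact Or.inl ⟨_, _, rfl⟩
  · exact Or.inl ⟨_, _, Subtype.ext Sym2.eq_swap⟩
  · exact Or.inr ⟨_, _, rfl⟩
  · exact Or.inr ⟨_, _, Subtype.ext Sym2.eq_swap⟩

lemma horizontal_inj {i j k l : ℤ} : horizontal i j = horizontal k l ↔ i = k ∧ j = l := by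
  simp only [horizontal, Subtype.mk_eq_mk, Sym2.eq_iff, Prod.mk_inj]
  lia

lemma vertical_inj {i j k l : ℤ} : vertical i j = vertical k l ↔ i = k ∧ j = l := by
  simp only [vertical, Subtype.mk_eq_mk, Sym2.eq_iff, Prod.mk_inj]
  lia

lemma horizontal_ne_vertical (i j k l : ℤ) : horizontal i j ≠ vertical k l := by
  simp only [horizontal, vertical, ne_eq, Subtype.mk_eq_mk, Sym2.eq_iff, Prod.mk_inj]
  lia

lemma graphBoundary_horizontal (i j : ℤ) :
    graphBoundary intGrid (Finsupp.single (horizontal i j) 1) =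
      Finsupp.single (i, j) 1 + Finsupp.single (i + 1, j) 1 :=
  graphBoundary_single _

lemma graphBoundary_vertical (i j : ℤ) :
    graphBoundary intGrid (Finsupp.single (vertical i j) 1) =
      Finsupp.single (i, j) 1 + Finsupp.single (i, j + 1) 1 :=
  graphBoundary_single _

/-- The boundary of the unit square with lower left corner `(i, j)`, as an edge chain. -/
noncomputable def square (i j : ℤ) : intGrid.edgeSet →₀ ZMod 2 :=
  Finsupp.single (horizontal i j) 1 + Finsupp.single (horizontal i (j + 1)) 1 +
    (Finsupp.single (vertical i j) 1 + Finsupp.single (vertical (i + 1) j) 1)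

lemma square_mem_cycleSpace (i j : ℤ) : square i j ∈ cycleSpace intGrid := by
  simp only [cycleSpace, LinearMap.mem_ker, square, map_add, graphBoundary_horizontal,
    graphBoundary_vertical]
  rw [add_add_add_comm (Finsupp.single (i, j) 1), ZModModule.add_self]

lemma square_horizontal_ne_zero {i j k l : ℤ} (h : square k l (horizontal i j) ≠ 0) :
    k = i ∧ (l = j ∨ l = j - 1) := by
  simp only [square, Finsupp.coe_add, Pi.add_apply, Finsupp.single_apply, horizontal_inj, ne_eq,
    (horizontal_ne_vertical _ _ _ _).symm] at h
  grind

lemma square_vertical_ne_zero {i j k l : ℤ} (h : square k l (vertical i j) ≠ 0) :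
    (k = i ∨ k = i - 1) ∧ l = j := by
  simp only [square, Finsupp.coe_add, Pi.add_apply, Finsupp.single_apply, vertical_inj, ne_eq,
    horizontal_ne_vertical] at h
  grind

lemma encard_square_le (e : intGrid.edgeSet) :
    {b ∈ range fun x : ℤ × ℤ => square x.1 x.2 | b e ≠ 0}.encard ≤ 2 := by
  have encard_pair_le (a b : intGrid.edgeSet →₀ ZMod 2) : ({a, b} : Set _).encard ≤ 2 :=
    (encard_insert_le _ _).trans_eq (by rw [encard_singleton, one_add_one_eq_two])
  obtain ⟨i, j, rfl⟩ | ⟨i, j, rfl⟩ := eq_horizontal_or_eq_vertical e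
  · refine (encard_le_encard ?_).trans (encard_pair_le (square i j) (square i (j - 1)))
    rintro _ ⟨⟨x, rfl⟩, hx⟩
    obtain ⟨rfl, h | h⟩ := square_horizontal_ne_zero hx <;> simp [h]
  · refine (encard_le_encard ?_).trans (encard_pair_le (square i j) (square (i - 1) j))
    rintro _ ⟨⟨x, rfl⟩, hx⟩
    obtain ⟨h | h, rfl⟩ := square_vertical_ne_zero hx <;> simp [h]

lemma vertical_add_row_mem_span_square {row : ℤ → ℤ → intGrid.edgeSet →₀ ZMod 2}
    (hrow₀ : ∀ j, row j 0 = 0)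
    (hrow : ∀ j i, row j i + row j (i + 1) = Finsupp.single (horizontal i j) 1) (i j : ℤ) :
    Finsupp.single (vertical i j) 1 + Finsupp.single (vertical 0 j) 1 +
      (row j i + row (j + 1) i) ∈
        Submodule.span (ZMod 2) (range fun x : ℤ × ℤ => square x.1 x.2) := by
  set S := Submodule.span (ZMod 2) (range fun x : ℤ × ℤ => square x.1 x.2)
  have hsquare (i : ℤ) : square i j ∈ S := Submodule.subset_span ⟨(i, j), rfl⟩
  have hstep (i : ℤ) : Finsupp.single (vertical (i + 1) j) 1 +
      Finsupp.single (vertical 0 j) 1 + (row j (i + 1) + row (j + 1) (i + 1)) +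
      (Finsupp.single (vertical i j) 1 + Finsupp.single (vertical 0 j) 1 +
      (row j i + row (j + 1) i)) = square i j := by
    rw [square, ← hrow, ← hrow]
    linear_combination (norm := module)
      ZModModule.add_self (Finsupp.single (vertical 0 j) (1 : ZMod 2))
  induction i with
  | zero => simp only [hrow₀, ZModModule.add_self, zero_mem]
  | succ i ih => exact (S.add_mem_iff_left ih).1 (hstep i ▸ hsquare i)
  | pred i ih => exact (S.add_mem_iff_right (by simpa using ih)).1 (hstep (-i - 1) ▸ hsquare _)

-- Each edge, closed up through the row paths of its ends to the axis `i = 0` and along that axis,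
-- is a sum of squares, and on a cycle the closing paths cancel.
lemma cycleSpace_le_span_square :
    cycleSpace intGrid ≤ Submodule.span (ZMod 2) (range fun x : ℤ × ℤ => square x.1 x.2) := by
  set S := Submodule.span (ZMod 2) (range fun x : ℤ × ℤ => square x.1 x.2)
  choose row hrow₀ hrow using fun j => exists_add_map_add_one_eq fun i =>
    (Finsupp.single (horizontal i j) 1 : intGrid.edgeSet →₀ ZMod 2)
  obtain ⟨col, -, hcol⟩ := exists_add_map_add_one_eq fun j =>
    (Finsupp.single (vertical 0 j) 1 : intGrid.edgeSet →₀ ZMod 2)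
  let path : (ℤ × ℤ →₀ ZMod 2) →ₗ[ZMod 2] (intGrid.edgeSet →₀ ZMod 2) :=
    Finsupp.linearCombination (ZMod 2) fun x => row x.2 x.1 + col x.2
  have hpath (x : ℤ × ℤ) : path (Finsupp.single x 1) = row x.2 x.1 + col x.2 := by simp [path]
  have hclosed (e : intGrid.edgeSet) :
      Finsupp.single e 1 + path (graphBoundary intGrid (Finsupp.single e 1)) ∈ S := by
    obtain ⟨i, j, rfl⟩ | ⟨i, j, rfl⟩ := eq_horizontal_or_eq_vertical e
    · rw [graphBoundary_horizontal, map_add, hpath, hpath, ← hrow]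
      convert S.zero_mem using 1
      linear_combination (norm := module) ZModModule.add_self (row j i + row j (i + 1) + col j)
    · rw [graphBoundary_vertical, map_add, hpath, hpath]
      convert vertical_add_row_mem_span_square hrow₀ hrow i j using 1
      rw [← hcol]
      module
  intro z hz
  have hmem := map_mem_of_forall_single (L := LinearMap.id + path ∘ₗ graphBoundary intGrid)
    (S := S) (z := z) fun e _ => hclosed e
  rwa [LinearMap.add_apply, LinearMap.comp_apply, show graphBoundary intGrid z = 0 from hz,
    map_zero, add_zero] at hmem

theorem hasTwoBasis_cycleSpace : HasTwoBasis (cycleSpace intGrid) := by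
  refine ⟨_, le_antisymm (Submodule.span_le.2 ?_) cycleSpace_le_span_square, encard_square_le⟩
  rintro _ ⟨x, rfl⟩
  exact square_mem_cycleSpace _ _

end intGrid

end Grid

section Linkage

variable {V W : Type*}

/-- A drawing of `H` by vertex sets of a graph `Γ`: connected stars around the vertices and
connected links along the edges, two of which meet only if an edge is incident with a vertex. -/
structure LinkageModel (H : SimpleGraph V) (Γ : SimpleGraph W) where
  star : V → Set W
  link : H.edgeSet → Set W
  star_connected : ∀ v, (Γ.induce (star v)).Connected
  link_preconnected : ∀ e, (Γ.induce (link e)).Preconnected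
  disjoint_star : Pairwise fun u v => Disjoint (star u) (star v)
  disjoint_link : Pairwise fun e f => Disjoint (link e) (link f)
  disjoint_link_star : ∀ e v, v ∉ e.1 → Disjoint (link e) (star v)
  link_inter_star : ∀ e, ∀ v ∈ e.1, (link e ∩ star v).Nonempty

lemma exists_connected_disjoint_adj {Γ : SimpleGraph W} {L A B : Set W}
    (hL : (Γ.induce L).Preconnected) (hA : (L ∩ A).Nonempty) (hB : (L ∩ B).Nonempty)
    (hAB : Disjoint A B) :
    ∃ P ⊆ L, (Γ.induce P).Connected ∧ (P ∩ A).Nonempty ∧ Disjoint P B ∧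
      ∃ q ∈ P, ∃ r ∈ B, Γ.Adj q r := by
  classical
  obtain ⟨a, haL, haA⟩ := hA
  obtain ⟨b, hbL, hbB⟩ := hB
  let P : Set W := {x | ∃ w : Γ.Walk a x, ∀ y ∈ w.support, y ∈ L \ B}
  have haP : a ∈ P := ⟨.nil, by simpa using ⟨haL, hAB.notMem_of_mem_left haA⟩⟩
  have hPLB : P ⊆ L \ B := fun x ⟨w, hw⟩ => hw x w.end_mem_support
  have hP : (Γ.induce P).Connected := by
    refine SimpleGraph.induce_connected_of_patches a haP fun {x} ⟨w, hw⟩ =>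
      ⟨{y | y ∈ w.support}, fun y hy => ⟨w.takeUntil y hy, fun z hz => ?_⟩, w.start_mem_support,
        w.end_mem_support, w.connected_induce_support.preconnected _ _⟩
    exact hw z (w.support_takeUntil_subset_support hy hz)
  have hbP : b ∉ P := fun hb => (hPLB hb).2 hbB
  obtain ⟨p⟩ := hL ⟨a, haL⟩ ⟨b, hbL⟩
  obtain ⟨⟨⟨q, r⟩, hqr⟩, -, hq, hr⟩ := p.exists_boundary_dart (Subtype.val ⁻¹' P) haP hbP
  have hqr : Γ.Adj q r := hqr
  refine ⟨P, hPLB.trans sdiff_subset, hP, ⟨a, haP, haA⟩,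
    disjoint_left.2 fun x hx => (hPLB hx).2, q, hq, r, ?_, hqr⟩
  by_contra hrB
  obtain ⟨w, hw⟩ := hq
  refine hr ⟨w.concat hqr, fun y hy => ?_⟩
  rw [SimpleGraph.Walk.support_concat, List.mem_append, List.mem_singleton] at hy
  obtain hy | rfl := hy
  · exact hw y hy
  · exact ⟨r.2, hrB⟩

lemma connected_induce_union_iUnion {ι : Sort*} {Γ : SimpleGraph W} {A : Set W} {P : ι → Set W}
    (hA : (Γ.induce A).Connected) (hP : ∀ i, (Γ.induce (P i)).Connected)
    (hPA : ∀ i, (P i ∩ A).Nonempty) : (Γ.induce (A ∪ ⋃ i, P i)).Connected := by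
  obtain ⟨a, ha⟩ := hA.nonempty
  refine SimpleGraph.induce_connected_of_patches a (Or.inl ha) fun {x} hx => ?_
  obtain hx | hx := hx
  · exact ⟨A, subset_union_left, ha, hx, hA.preconnected _ _⟩
  · obtain ⟨i, hi⟩ := mem_iUnion.1 hx
    exact ⟨P i ∪ A, union_subset ((subset_iUnion P i).trans subset_union_right) subset_union_left,
      Or.inr ha, Or.inl hi, (SimpleGraph.induce_union_connected (hP i).preconnected
        hA.preconnected (hPA i)).preconnected _ _⟩

namespace LinkageModel

variable {H : SimpleGraph V} {Γ : SimpleGraph W}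

-- Orient the edges; the branch set of `v` takes in the link of each edge leaving `v`, up to the
-- star of its head.
theorem nonempty_minorModel (D : LinkageModel H Γ) : Nonempty (MinorModel H Γ) := by
  let tail (e : H.edgeSet) : V := e.1.out.1
  let head (e : H.edgeSet) : V := e.1.out.2
  have mk_tail_head (e : H.edgeSet) : s(tail e, head e) = e.1 := e.1.out_eq
  have tail_mem (e : H.edgeSet) : tail e ∈ e.1 := e.1.out_fst_mem
  have head_mem (e : H.edgeSet) : head e ∈ e.1 := e.1.out_snd_mem
  have tail_ne_head (e : H.edgeSet) : tail e ≠ head e := by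
    refine SimpleGraph.Adj.ne (G := H) ?_
    rw [← SimpleGraph.mem_edgeSet, mk_tail_head]
    exact e.2
  choose P hPlink hP hPtail hPhead q hq r hr hqr using fun e => exists_connected_disjoint_adj
    (D.link_preconnected e) (D.link_inter_star e _ (tail_mem e))
    (D.link_inter_star e _ (head_mem e)) (D.disjoint_star (tail_ne_head e))
  have hPstar {e : H.edgeSet} {v : V} (hv : v ≠ tail e) : Disjoint (P e) (D.star v) := by
    by_cases hve : v ∈ e.1
    · rw [← mk_tail_head, Sym2.mem_iff] at hve
      obtain rfl := hve.resolve_left hv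
      exact hPhead e
    · exact (D.disjoint_link_star e v hve).mono_left (hPlink e)
  let branch (v : V) : Set W := D.star v ∪ ⋃ e : {e // tail e = v}, P e
  refine ⟨⟨branch, fun v => ?_, fun u v huv => ?_, fun u v huv => ?_⟩⟩
  · exact connected_induce_union_iUnion (D.star_connected v) (fun e => hP e)
      fun ⟨e, he⟩ => he ▸ hPtail e
  · simp only [branch, disjoint_union_left, disjoint_union_right, disjoint_iUnion_left,
      disjoint_iUnion_right]
    refine ⟨⟨D.disjoint_star huv, ?_⟩, ?_⟩
    · rintro ⟨e, rfl⟩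
      exact hPstar huv.symm
    · rintro ⟨e, rfl⟩
      refine ⟨(hPstar huv).symm, ?_⟩
      rintro ⟨f, rfl⟩
      exact (D.disjoint_link (ne_of_apply_ne tail huv)).mono (hPlink _) (hPlink _)
  · obtain ⟨x, hx, y, hy, hxy⟩ : ∃ x ∈ branch (tail ⟨s(u, v), huv⟩),
        ∃ y ∈ branch (head ⟨s(u, v), huv⟩), Γ.Adj x y :=
      ⟨_, Or.inr (mem_iUnion.2 ⟨⟨_, rfl⟩, hq _⟩), _, Or.inl (hr _), hqr _⟩
    obtain ⟨htail, hhead⟩ | ⟨htail, hhead⟩ := Sym2.eq_iff.1 (mk_tail_head ⟨s(u, v), huv⟩)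
    · exact ⟨x, htail ▸ hx, y, hhead ▸ hy, hxy⟩
    · exact ⟨y, hhead ▸ hy, x, htail ▸ hx, hxy.symm⟩

end LinkageModel

end Linkage

section Discretization

open Metric

/-- The point of the grid of mesh `h` in the plane with integer coordinates `k`. -/
def gridPoint (h : ℝ) (k : ℤ × ℤ) : ℝ × ℝ := (k.1 * h, k.2 * h)

/-- The points of the grid of mesh `h`, in integer coordinates, at distance less than `h` from a
set `A` in the plane. -/
def gridNear (h : ℝ) (A : Set (ℝ × ℝ)) : Set (ℤ × ℤ) := gridPoint h ⁻¹' thickening h A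

lemma exists_dist_gridPoint_lt {h : ℝ} (hh : 0 < h) (a : ℝ × ℝ) :
    ∃ k, dist (gridPoint h k) a < h := by
  have dist_floor_lt (t : ℝ) : dist (⌊t / h⌋ * h) t < h := by
    rw [dist_comm, Real.dist_eq, abs_of_nonneg (Int.sub_floor_div_mul_nonneg t hh)]
    exact Int.sub_floor_div_mul_lt t hh
  exact ⟨(⌊a.1 / h⌋, ⌊a.2 / h⌋), by
    rw [Prod.dist_eq]
    exact max_lt (dist_floor_lt a.1) (dist_floor_lt a.2)⟩

lemma gridNear_inter_nonempty {h : ℝ} (hh : 0 < h) {A B : Set (ℝ × ℝ)} (hAB : (A ∩ B).Nonempty) :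
    (gridNear h A ∩ gridNear h B).Nonempty := by
  obtain ⟨a, haA, haB⟩ := hAB
  obtain ⟨k, hk⟩ := exists_dist_gridPoint_lt hh a
  exact ⟨k, mem_thickening_iff.2 ⟨a, haA, hk⟩, mem_thickening_iff.2 ⟨a, haB, hk⟩⟩

lemma abs_sub_le_one_of_dist_mul_lt {h a : ℝ} {k l : ℤ} (hk : dist (k * h) a < h)
    (hl : dist (l * h) a < h) : |k - l| ≤ 1 := by
  have hh : 0 < h := dist_nonneg.trans_lt hk
  have hkl : |(k : ℝ) - l| * h < 2 * h :=
    calc |(k : ℝ) - l| * h = dist (k * h) (l * h) := by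
          rw [Real.dist_eq, ← sub_mul, abs_mul, abs_of_pos hh]
      _ ≤ dist (k * h) a + dist (l * h) a := dist_triangle_right _ _ _
      _ < 2 * h := by linarith
  have hlt : |(k : ℝ) - l| < 2 := lt_of_mul_lt_mul_right hkl hh.le
  exact Int.lt_add_one_iff.1 (by exact_mod_cast hlt)

-- In the sup metric the grid points near `a` form a box, so two of them are joined by a row step
-- followed by a column step among them.
lemma reachable_induce_gridNear_of_dist_lt {h : ℝ} {A : Set (ℝ × ℝ)} {a : ℝ × ℝ} (ha : a ∈ A)
    (k l : gridNear h A) (hk : dist (gridPoint h k) a < h) (hl : dist (gridPoint h l) a < h) :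
    (intGrid.induce (gridNear h A)).Reachable k l := by
  obtain ⟨⟨i, j⟩, hkA⟩ := k
  obtain ⟨⟨i', j'⟩, hlA⟩ := l
  rw [Prod.dist_eq, max_lt_iff] at hk hl
  have hm : (i', j) ∈ gridNear h A := mem_thickening_iff.2 ⟨a, ha, by
    rw [Prod.dist_eq]; exact max_lt hl.1 hk.2⟩
  have hi := abs_le.1 (abs_sub_le_one_of_dist_mul_lt hk.1 hl.1)
  have hj := abs_le.1 (abs_sub_le_one_of_dist_mul_lt hk.2 hl.2)
  have row : (intGrid.induce (gridNear h A)).Reachable ⟨(i, j), hkA⟩ ⟨(i', j), hm⟩ := by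
    obtain rfl | hne := eq_or_ne i i'
    · rfl
    · exact SimpleGraph.Adj.reachable (intGrid.adj_iff.2 (by dsimp at hi ⊢; lia))
  have column : (intGrid.induce (gridNear h A)).Reachable ⟨(i', j), hm⟩ ⟨(i', j'), hlA⟩ := by
    obtain rfl | hne := eq_or_ne j j'
    · rfl
    · exact SimpleGraph.Adj.reachable (intGrid.adj_iff.2 (by dsimp at hj ⊢; lia))
  exact row.trans column

lemma preconnected_induce_gridNear {h : ℝ} {A : Set (ℝ × ℝ)} (hA : IsPreconnected A) :
    (intGrid.induce (gridNear h A)).Preconnected := by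
  intro k l
  obtain ⟨a, ha, hka⟩ := mem_thickening_iff.1 k.2
  obtain ⟨b, hb, hlb⟩ := mem_thickening_iff.1 l.2
  have hh : 0 < h := dist_nonneg.trans_lt hka
  refine hA.induction₂ (fun a b => ∀ k l : gridNear h A, dist (gridPoint h k) a < h →
    dist (gridPoint h l) b < h → (intGrid.induce (gridNear h A)).Reachable k l)
    (fun a ha => ?_) (fun a b c _ hb _ hab hbc k l hk hl => ?_)
    (fun a b _ _ hab k l hk hl => (hab l k hl hk).symm) ha hb k l hka hlb
  · obtain ⟨m, hm⟩ := exists_dist_gridPoint_lt hh a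
    filter_upwards [self_mem_nhdsWithin, mem_nhdsWithin_of_mem_nhds
      (isOpen_ball.mem_nhds (mem_ball'.2 hm))] with b hb hmb k l hk hl
    have hmA : m ∈ gridNear h A := mem_thickening_iff.2 ⟨a, ha, hm⟩
    exact (reachable_induce_gridNear_of_dist_lt ha k ⟨m, hmA⟩ hk hm).trans
      (reachable_induce_gridNear_of_dist_lt hb ⟨m, hmA⟩ l (mem_ball'.1 hmb) hl)
  · obtain ⟨m, hm⟩ := exists_dist_gridPoint_lt hh b
    have hmA : m ∈ gridNear h A := mem_thickening_iff.2 ⟨b, hb, hm⟩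
    exact (hab k ⟨m, hmA⟩ hk hm).trans (hbc ⟨m, hmA⟩ l hm hl)

lemma connected_induce_gridNear {h : ℝ} (hh : 0 < h) {A : Set (ℝ × ℝ)} (hA : IsConnected A) :
    (intGrid.induce (gridNear h A)).Connected where
  preconnected := preconnected_induce_gridNear hA.isPreconnected
  nonempty := by
    obtain ⟨k, hk, -⟩ := gridNear_inter_nonempty hh (A := A) (B := A)
      (by rw [inter_self]; exact hA.nonempty)
    exact ⟨k, hk⟩

lemma exists_pos_forall_disjoint_thickening {ι X : Type*} [Finite ι] [MetricSpace X]
    {K : ι → Set X} (hK : ∀ i, IsCompact (K i)) :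
    ∃ h > 0, ∀ i j, Disjoint (K i) (K j) → Disjoint (thickening h (K i)) (thickening h (K j)) := by
  have hev : ∀ᶠ h in nhdsWithin (0 : ℝ) (Ioi 0), ∀ i j, Disjoint (K i) (K j) →
      Disjoint (thickening h (K i)) (thickening h (K j)) := by
    refine Filter.eventually_all.2 fun i => Filter.eventually_all.2 fun j => ?_
    by_cases hij : Disjoint (K i) (K j)
    · obtain ⟨δ, hδ, hdisj⟩ := hij.exists_thickenings (hK i) (hK j).isClosed
      filter_upwards [Ioo_mem_nhdsGT hδ] with h hh _
      exact hdisj.mono (thickening_mono hh.2.le _) (thickening_mono hh.2.le _)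
    · exact Filter.Eventually.of_forall fun _ h => absurd h hij
  obtain ⟨h, hdisj, hh⟩ := (hev.and self_mem_nhdsWithin).exists
  exact ⟨h, hh, hdisj⟩

/-- A topological drawing of `H` in the plane without crossings: compact connected stars around the
vertices and links along the edges, two of which meet only if an edge is incident with a vertex. -/
structure PlaneModel {V : Type*} (H : SimpleGraph V) where
  star : V → Set (ℝ × ℝ)
  link : H.edgeSet → Set (ℝ × ℝ)
  isCompact_star : ∀ v, IsCompact (star v)
  isCompact_link : ∀ e, IsCompact (link e)
  isConnected_star : ∀ v, IsConnected (star v)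
  isPreconnected_link : ∀ e, IsPreconnected (link e)
  disjoint_star : Pairwise fun u v => Disjoint (star u) (star v)
  disjoint_link : Pairwise fun e f => Disjoint (link e) (link f)
  disjoint_link_star : ∀ e v, v ∉ e.1 → Disjoint (link e) (star v)
  link_inter_star : ∀ e, ∀ v ∈ e.1, (link e ∩ star v).Nonempty

namespace PlaneModel

variable {V : Type*} [Finite V] {H : SimpleGraph V}

lemma nonempty_linkageModel (D : PlaneModel H) : Nonempty (LinkageModel H intGrid) := by
  obtain ⟨h, hh, hdisj⟩ := exists_pos_forall_disjoint_thickening (K := Sum.elim D.star D.link)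
    (Sum.rec D.isCompact_star D.isCompact_link)
  exact ⟨{
    star := fun v => gridNear h (D.star v)
    link := fun e => gridNear h (D.link e)
    star_connected := fun v => connected_induce_gridNear hh (D.isConnected_star v)
    link_preconnected := fun e => preconnected_induce_gridNear (D.isPreconnected_link e)
    disjoint_star := fun u v huv =>
      (hdisj (.inl u) (.inl v) (D.disjoint_star huv)).preimage _
    disjoint_link := fun e f hef =>
      (hdisj (.inr e) (.inr f) (D.disjoint_link hef)).preimage _
    disjoint_link_star := fun e v hve =>
      (hdisj (.inr e) (.inl v) (D.disjoint_link_star e v hve)).preimage _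
    link_inter_star := fun e v hve => gridNear_inter_nonempty hh (D.link_inter_star e v hve) }⟩

theorem hasTwoBasis_cycleSpace (D : PlaneModel H) : HasTwoBasis (cycleSpace H) := by
  obtain ⟨D'⟩ := D.nonempty_linkageModel
  obtain ⟨M⟩ := D'.nonempty_minorModel
  exact intGrid.hasTwoBasis_cycleSpace.of_minorModel M

end PlaneModel

end Discretization

lemma card_mul_minDegree_le {V : Type*} [Fintype V] (G : SimpleGraph V) [DecidableRel G.Adj] :
    Fintype.card V * G.minDegree ≤ 2 * Nat.card G.edgeSet := by
  classical
  rw [Nat.card_eq_fintype_card, ← SimpleGraph.edgeFinset_card, ← G.sum_degrees_eq_twice_card_edges,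
    ← smul_eq_mul]
  exact Finset.card_nsmul_le_sum _ _ _ fun v _ => G.minDegree_le_degree v

namespace ICDrawing

variable {V : Type*} {G : SimpleGraph V} (D : ICDrawing G)

lemma image_arc_swap (u v : V) {I : Set ℝ} (hI : (1 - ·) '' I = I) :
    D.arc u v '' I = D.arc v u '' I := by
  conv_rhs => rw [← hI, image_image]
  exact image_congr fun t _ => D.arc_symm u v t

/-- The open arc of an edge, without its endpoints. -/
def edgeInterior : Sym2 V → Set (ℝ × ℝ) :=
  Sym2.lift ⟨fun u v => D.arc u v '' Ioo 0 1, fun u v => D.image_arc_swap u v (by simp)⟩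

/-- The middle third of the arc of an edge; the outer thirds go to the stars of its endpoints. -/
def edgeMiddle : Sym2 V → Set (ℝ × ℝ) :=
  Sym2.lift ⟨fun u v => D.arc u v '' Icc (1 / 3) (2 / 3), fun u v =>
    D.image_arc_swap u v (by rw [image_const_sub_Icc]; norm_num)⟩

/-- The vertex `u` together with the first thirds of the arcs of the edges of `H` at `u`. -/
def star (H : SimpleGraph V) (u : V) : Set (ℝ × ℝ) :=
  insert (D.pos u) (⋃ v ∈ H.neighborSet u, D.arc u v '' Icc 0 (1 / 3))

lemma edgeMiddle_subset_edgeInterior (e : Sym2 V) : D.edgeMiddle e ⊆ D.edgeInterior e := by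
  induction e with | h u v => exact image_mono (Icc_subset_Ioo (by norm_num) (by norm_num))

lemma pos_eq_of_pos_eq_arc {u v w : V} (hvw : G.Adj v w) {t : ℝ} (ht : t ∈ Ico (0 : ℝ) 1)
    (h : D.pos u = D.arc v w t) : u = v := by
  obtain rfl | ht0 := ht.1.eq_or_lt
  · exact D.pos_inj (h.trans (D.arc_start v w hvw))
  · exact absurd h.symm (D.arc_avoid v w hvw t ⟨ht0, ht.2⟩ u)

lemma mem_star {H : SimpleGraph V} {u : V} {p : ℝ × ℝ} : p ∈ D.star H u ↔
    p = D.pos u ∨ ∃ v, H.Adj u v ∧ ∃ t ∈ Icc (0 : ℝ) (1 / 3), D.arc u v t = p := by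
  simp only [star, mem_insert_iff, mem_iUnion₂, mem_image, SimpleGraph.mem_neighborSet, exists_prop]

lemma firstThird_subset : Icc (0 : ℝ) (1 / 3) ⊆ Ico 0 1 :=
  Icc_subset_Ico_right (by norm_num)

lemma edgeMiddle_inter_star_nonempty {H : SimpleGraph V} {u v : V} (huv : H.Adj u v) :
    (D.edgeMiddle s(u, v) ∩ D.star H u).Nonempty :=
  ⟨D.arc u v (1 / 3), ⟨1 / 3, by norm_num, rfl⟩,
    D.mem_star.2 (.inr ⟨v, huv, 1 / 3, by norm_num, rfl⟩)⟩

section Subgraph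

variable {D} {H : SimpleGraph V} (hHG : H ≤ G) (hH : H.edgeSet.PairwiseDisjoint D.edgeInterior)

include hHG

lemma isCompact_star [Finite V] (u : V) : IsCompact (D.star H u) :=
  ((toFinite _).isCompact_biUnion fun v hv => isCompact_Icc.image_of_continuousOn
    ((D.arc_cont u v (hHG hv)).mono (Icc_subset_Icc_right (by norm_num)))).insert _

lemma isConnected_star (u : V) : IsConnected (D.star H u) := by
  refine ⟨insert_nonempty _ _, isPreconnected_of_forall (D.pos u) fun p hp => ?_⟩
  obtain rfl | hp := hp
  · exact ⟨{D.pos u}, by simp [star], rfl, rfl, isPreconnected_singleton⟩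
  · obtain ⟨v, huv, hp⟩ := mem_iUnion₂.1 hp
    refine ⟨_, (subset_biUnion_of_mem (u := fun v => D.arc u v '' Icc 0 (1 / 3)) huv).trans
      (subset_insert _ _), ⟨0, by norm_num, D.arc_start u v (hHG huv)⟩, hp, ?_⟩
    exact isPreconnected_Icc.image _
      ((D.arc_cont u v (hHG huv)).mono (Icc_subset_Icc_right (by norm_num)))

lemma isCompact_edgeMiddle {e : Sym2 V} (he : e ∈ H.edgeSet) : IsCompact (D.edgeMiddle e) := by
  induction e with | h u v =>
  exact isCompact_Icc.image_of_continuousOn ((D.arc_cont u v (hHG he)).mono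
    (Icc_subset_Icc (by norm_num) (by norm_num)))

lemma isPreconnected_edgeMiddle {e : Sym2 V} (he : e ∈ H.edgeSet) :
    IsPreconnected (D.edgeMiddle e) := by
  induction e with | h u v =>
  exact isPreconnected_Icc.image _ ((D.arc_cont u v (hHG he)).mono
    (Icc_subset_Icc (by norm_num) (by norm_num)))

include hH

lemma eq_or_edge_eq_of_arc_eq_arc {u w v x : V} (huw : H.Adj u w) (hvx : H.Adj v x) {s t : ℝ}
    (hs : s ∈ Ico (0 : ℝ) 1) (ht : t ∈ Ico (0 : ℝ) 1) (h : D.arc u w s = D.arc v x t) :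
    u = v ∨ s(u, w) = s(v, x) := by
  obtain rfl | hs0 := hs.1.eq_or_lt
  · exact .inl (D.pos_eq_of_pos_eq_arc (hHG hvx) ht (D.arc_start u w (hHG huw) ▸ h))
  obtain rfl | ht0 := ht.1.eq_or_lt
  · exact .inl (D.pos_eq_of_pos_eq_arc (hHG huw) hs (D.arc_start v x (hHG hvx) ▸ h.symm)).symm
  exact .inr (hH.elim_set huw hvx _ ⟨s, ⟨hs0, hs.2⟩, rfl⟩ ⟨t, ⟨ht0, ht.2⟩, h.symm⟩)

lemma disjoint_star {u v : V} (huv : u ≠ v) : Disjoint (D.star H u) (D.star H v) := by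
  refine disjoint_left.2 fun p hp hq => ?_
  obtain rfl | ⟨w, huw, s, hs, rfl⟩ := D.mem_star.1 hp
  · obtain h | ⟨x, hvx, t, ht, h⟩ := D.mem_star.1 hq
    · exact huv (D.pos_inj h)
    · exact huv (D.pos_eq_of_pos_eq_arc (hHG hvx) (firstThird_subset ht) h.symm)
  · obtain h | ⟨x, hvx, t, ht, h⟩ := D.mem_star.1 hq
    · exact huv (D.pos_eq_of_pos_eq_arc (hHG huw) (firstThird_subset hs) h.symm).symm
    · have hedge : s(u, w) = s(v, x) := (eq_or_edge_eq_of_arc_eq_arc hHG hH huw hvx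
        (firstThird_subset hs) (firstThird_subset ht) h.symm).resolve_left huv
      obtain ⟨rfl, rfl⟩ | ⟨rfl, rfl⟩ := Sym2.eq_iff.1 hedge
      · exact huv rfl
      · rw [D.arc_symm] at h
        have hst : 1 - t = s := D.arc_inj u w (hHG huw)
          ⟨by linarith [ht.2], by linarith [ht.1]⟩ ⟨hs.1, by linarith [hs.2]⟩ h
        linarith [hs.2, ht.2]

lemma disjoint_edgeMiddle_star {e : Sym2 V} (he : e ∈ H.edgeSet) {v : V} (hve : v ∉ e) :
    Disjoint (D.edgeMiddle e) (D.star H v) := by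
  induction e with | h x y =>
  refine disjoint_left.2 ?_
  rintro _ ⟨s, hs, rfl⟩ hq
  have hs' : s ∈ Ioo (0 : ℝ) 1 := Icc_subset_Ioo (by norm_num) (by norm_num) hs
  obtain h | ⟨w, hvw, t, ht, h⟩ := D.mem_star.1 hq
  · exact D.arc_avoid x y (hHG he) s hs' v h
  · obtain rfl | hedge := eq_or_edge_eq_of_arc_eq_arc hHG hH hvw he
      (firstThird_subset ht) (Ioo_subset_Ico_self hs') h
    · exact hve (Sym2.mem_mk_left _ _)
    · exact hve (hedge ▸ Sym2.mem_mk_left _ _)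

/-- Cutting every arc into thirds turns a drawing of `H` without crossings into a plane model. -/
def planeModel [Finite V] : PlaneModel H where
  star := D.star H
  link e := D.edgeMiddle e
  isCompact_star := isCompact_star hHG
  isCompact_link e := isCompact_edgeMiddle hHG e.2
  isConnected_star := isConnected_star hHG
  isPreconnected_link e := isPreconnected_edgeMiddle hHG e.2
  disjoint_star _ _ huv := disjoint_star hHG hH huv
  disjoint_link e f hef := (hH e.2 f.2 (Subtype.coe_injective.ne hef)).mono
    (D.edgeMiddle_subset_edgeInterior e) (D.edgeMiddle_subset_edgeInterior f)
  disjoint_link_star e _ hve := disjoint_edgeMiddle_star hHG hH e.2 hve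
  link_inter_star := by
    rintro ⟨e, he⟩ v hve
    obtain ⟨w, rfl⟩ := Sym2.mem_iff_exists.1 hve
    exact D.edgeMiddle_inter_star_nonempty he

end Subgraph

/-- Two distinct edges cross if their open arcs meet. -/
structure Crosses (e f : Sym2 V) : Prop where
  left_mem : e ∈ G.edgeSet
  right_mem : f ∈ G.edgeSet
  ne : e ≠ f
  not_disjoint : ¬Disjoint (D.edgeInterior e) (D.edgeInterior f)

lemma exists_plane_subgraph_forall_crosses [Finite V] :
    ∃ H ≤ G, H.edgeSet.PairwiseDisjoint D.edgeInterior ∧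
      ∀ e ∈ G.edgeSet \ H.edgeSet, ∃ f ∈ H.edgeSet, D.Crosses e f := by
  obtain ⟨H, ⟨hHG, hH⟩, hmax⟩ := (toFinite {H : SimpleGraph V | H ≤ G ∧
    H.edgeSet.PairwiseDisjoint D.edgeInterior}).exists_maximal ⟨⊥, bot_le, by simp⟩
  refine ⟨H, hHG, hH, fun e he => ?_⟩
  by_contra! hcross
  induction e with | h u v =>
  have hedges : (H ⊔ SimpleGraph.edge u v).edgeSet = insert s(u, v) H.edgeSet := by
    rw [SimpleGraph.edgeSet_sup, SimpleGraph.edgeSet_edge_of_ne he.1.ne, union_singleton]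
  have hplane : (H ⊔ SimpleGraph.edge u v).edgeSet.PairwiseDisjoint D.edgeInterior := by
    rw [hedges]
    refine hH.insert fun f hf hne => ?_
    by_contra hdisj
    exact hcross f hf ⟨he.1, SimpleGraph.edgeSet_mono hHG hf, hne, hdisj⟩
  have hle : H ⊔ SimpleGraph.edge u v ≤ H :=
    hmax ⟨sup_le hHG ((SimpleGraph.edge_le_iff G).2 (.inr he.1)), hplane⟩ le_sup_left
  exact he.2 (SimpleGraph.edgeSet_mono hle (hedges ▸ mem_insert _ _))

namespace Crosses

variable {D} [DecidableEq V] {e f e' f' : Sym2 V}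

lemma disjoint_cluster (h : D.Crosses e f) (h' : D.Crosses e' f')
    (hne : ({e, f} : Set (Sym2 V)) ≠ {e', f'}) :
    Disjoint (e.toFinset ∪ f.toFinset) (e'.toFinset ∪ f'.toFinset) := by
  induction e with | h u v =>
  induction f with | h x y =>
  induction e' with | h u' v' =>
  induction f' with | h x' y' =>
  have hdisj : Disjoint ({u, v, x, y} : Set V) {u', v', x', y'} := disjoint_iff_inter_eq_empty.2 <|
    D.ic u v x y u' v' x' y' h.left_mem h.right_mem h'.left_mem h'.right_mem h.ne h'.ne
      (not_disjoint_iff_nonempty_inter.1 h.not_disjoint)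
      (not_disjoint_iff_nonempty_inter.1 h'.not_disjoint) hne
  rw [← Finset.disjoint_coe]
  simpa only [Finset.coe_union, Sym2.toFinset_mk_eq, Finset.coe_pair, insert_union,
    singleton_union] using hdisj

-- A drawing may let two adjacent edges cross, so a cluster need not have four vertices; this costs
-- a little in the edge bound below compared with the paper's.
lemma three_le_card_cluster (h : D.Crosses e f) : 3 ≤ (e.toFinset ∪ f.toFinset).card := by
  by_contra! hlt
  have eq_cluster {g : Sym2 V} (hg : g ∈ G.edgeSet) (hsub : g.toFinset ⊆ e.toFinset ∪ f.toFinset) :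
      g.toFinset = e.toFinset ∪ f.toFinset :=
    Finset.eq_of_subset_of_card_le hsub
      (by rw [Sym2.card_toFinset_of_not_isDiag g (G.not_isDiag_of_mem_edgeSet hg)]; lia)
  have hef : e.toFinset = f.toFinset := (eq_cluster h.left_mem Finset.subset_union_left).trans
    (eq_cluster h.right_mem Finset.subset_union_right).symm
  exact h.ne (Sym2.ext fun v => by rw [← Sym2.mem_toFinset, hef, Sym2.mem_toFinset])

end Crosses

lemma three_mul_card_le_of_forall_crosses [Fintype V] {R : Finset (Sym2 V)}
    (hR : ∀ e ∈ R, ∃ f ∉ R, D.Crosses e f) : 3 * R.card ≤ Fintype.card V := by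
  classical
  choose! partner hpartner hcross using hR
  let cluster (e : Sym2 V) : Finset V := e.toFinset ∪ (partner e).toFinset
  have hdisj : (R : Set (Sym2 V)).PairwiseDisjoint cluster := by
    refine fun e he e' he' hne => (hcross e he).disjoint_cluster (hcross e' he') fun hpair => ?_
    have hmem : e ∈ ({e', partner e'} : Set (Sym2 V)) := hpair ▸ mem_insert e _
    obtain rfl | rfl := hmem
    · exact hne rfl
    · exact hpartner e' he' he
  calc 3 * R.card = ∑ _e ∈ R, 3 := by rw [Finset.sum_const, smul_eq_mul, mul_comm]
    _ ≤ ∑ e ∈ R, (cluster e).card :=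
        Finset.sum_le_sum fun e he => (hcross e he).three_le_card_cluster
    _ = (R.biUnion cluster).card := (Finset.card_biUnion hdisj).symm
    _ ≤ Fintype.card V := Finset.card_le_univ _

theorem mul_card_edgeSet_add_le [Finite V] [Nonempty V] (D : ICDrawing G) {k : ℕ}
    (hg : ((k + 2 : ℕ) : ℕ∞) ≤ G.egirth) :
    3 * k * Nat.card G.edgeSet + 3 * (k + 2) ≤ (4 * k + 6) * Nat.card V := by
  have := Fintype.ofFinite V
  obtain ⟨H, hHG, hH, hcross⟩ := D.exists_plane_subgraph_forall_crosses
  have hplane : k * H.edgeSet.ncard + (k + 2) ≤ (k + 2) * Nat.card V :=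
    (planeModel hHG hH).hasTwoBasis_cycleSpace.mul_card_edgeSet_add_le
      (hg.trans (SimpleGraph.egirth_anti hHG))
  have hremoved : 3 * (G.edgeSet \ H.edgeSet).ncard ≤ Nat.card V := by
    rw [Nat.card_eq_fintype_card, ncard_eq_toFinset_card _ (toFinite _)]
    refine D.three_mul_card_le_of_forall_crosses fun e he => ?_
    obtain ⟨f, hf, hef⟩ := hcross e ((toFinite _).mem_toFinset.1 he)
    exact ⟨f, fun hfR => ((toFinite _).mem_toFinset.1 hfR).2 hf, hef⟩
  have hedges : (G.edgeSet \ H.edgeSet).ncard + H.edgeSet.ncard = Nat.card G.edgeSet :=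
    ncard_sdiff_add_ncard_of_subset (SimpleGraph.edgeSet_mono hHG)
  rw [← hedges]
  nlinarith [Nat.mul_le_mul_left k hremoved]

theorem mul_minDegree_lt [Fintype V] [Nonempty V] [DecidableRel G.Adj] (D : ICDrawing G) {k : ℕ}
    (hg : ((k + 2 : ℕ) : ℕ∞) ≤ G.egirth) :
    3 * k * G.minDegree < 8 * k + 12 := by
  refine Nat.lt_of_mul_lt_mul_left (a := Fintype.card V) ?_
  have hedges := D.mul_card_edgeSet_add_le hg
  rw [Nat.card_eq_fintype_card (α := V)] at hedges
  calc Fintype.card V * (3 * k * G.minDegree) = 3 * k * (Fintype.card V * G.minDegree) := by ring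
    _ ≤ 3 * k * (2 * Nat.card G.edgeSet) := Nat.mul_le_mul_left _ (card_mul_minDegree_le G)
    _ < 2 * (3 * k * Nat.card G.edgeSet + 3 * (k + 2)) := by linarith
    _ ≤ 2 * ((4 * k + 6) * Fintype.card V) := Nat.mul_le_mul_left _ hedges
    _ = Fintype.card V * (8 * k + 12) := by ring

end ICDrawing

/-- Every IC-planar graph has minimum degree at most 6; with girth at least 4, at most 4;
with girth at least 5, at most 3. -/
theorem ic_planar_min_degree {V : Type*} [Fintype V] [Nonempty V] (G : SimpleGraph V)
    [DecidableRel G.Adj] (hic : G.ICPlanar) :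
    G.minDegree ≤ 6 ∧
    ((4 : ℕ∞) ≤ G.egirth → G.minDegree ≤ 4) ∧
    ((5 : ℕ∞) ≤ G.egirth → G.minDegree ≤ 3) := by
  obtain ⟨D⟩ := hic
  refine ⟨?_, fun hg => ?_, fun hg => ?_⟩
  · have := D.mul_minDegree_lt (k := 1) G.three_le_egirth
    lia
  · have := D.mul_minDegree_lt (k := 2) hg
    lia
  · have := D.mul_minDegree_lt (k := 3) hg
    lia
end

section
/- The complete graph K₆ is not IC-planar; equivalently, if a vertex z of an IC-plane graph has 5 neighbors that are pairwise adjacent, then together with z they induce a K₆, which is impossible. Hence in any IC-plane graph, every vertex with at least 5 neighbors in a set S has two neighbors in S that are nonadjacent. -/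
open Set

/-!
For a path `γ` in `ℂ` avoiding `p`, let `ρ(γ, p)` be the ratio of the two end values of a continuous
branch of `√(γ - p)`. If `γ` from `a` to `b` and `γ'` from `a'` to `b'` are disjoint, then
`γ s - γ' t` has a continuous square root on the whole square, and comparing its values at the
corners gives `ρ(γ', a) ρ(γ, b') = ρ(γ, a') ρ(γ', b)`. Multiplying these relations over the pairs of
independent edges of two claws with centres `a`, `a'` and the same three leaves, the factors
`ρ(γ', a)` and `ρ(γ, a')` occur squared and so become explicit; what remains says that a certain
nonzero weight of a claw changes sign from one claw to the other. Three claws with the same leaves,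
that is a drawing of `K₃,₃` without crossings of independent edges, are therefore impossible.

In `K₆`, splitting the vertices into two triples yields a crossing `ab × a'b'`. Splitting them again
with `a` and `b` in the same triple yields a crossing that does not involve the edge `ab`, but whose
cluster contains two vertices of that triple, hence `a` or `b`. The clusters are not disjoint.
-/

section RootRatio

/-- For a path `γ` from `a` to `b` avoiding `p`, the ratio `r 1 / r 0` of the end values of a
continuous branch `r` of `√(γ - p)`: the square root of `(b - p) / (a - p)` singled out by `γ`.
It is a junk value if there is no such branch. -/
noncomputable def rootRatio {a b : ℂ} (γ : Path a b) (p : ℂ) : ℂ :=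
  Classical.epsilon fun c ↦
    ∃ r : ℝ → ℂ, Continuous r ∧ (∀ t, r t ^ 2 = γ.extend t - p) ∧ c = r 1 / r 0

theorem exists_continuous_pow_eq {X : Type*} [TopologicalSpace X] [LocallyPathConnectedSpace X]
    [SimplyConnectedSpace X] {g : X → ℂ} (hg : Continuous g) (hg₀ : ∀ x, g x ≠ 0) {n : ℕ}
    (hn : n ≠ 0) : ∃ r : X → ℂ, Continuous r ∧ ∀ x, r x ^ n = g x := by
  have huniv : IsSimplyConnected (univ : Set X) :=
    (Homeomorph.Set.univ X).toHomotopyEquiv.simplyConnectedSpace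
  obtain ⟨r, hr, hrg⟩ := Complex.exists_continuousOn_pow_eq huniv isOpen_univ hg.continuousOn
    (by simpa using hg₀) hn
  exact ⟨r, continuousOn_univ.1 hr, hrg⟩

variable {a b a' b' p : ℂ} {γ : Path a b} {γ' : Path a' b'}

theorem extend_sub_ne_zero (hp : p ∉ range γ) (t : ℝ) : γ.extend t - p ≠ 0 := fun h ↦
  hp (γ.extend_range ▸ ⟨t, sub_eq_zero.1 h⟩)

theorem rootRatio_eq_div {r : ℝ → ℂ} (hr : Continuous r) (hrγ : ∀ t, r t ^ 2 = γ.extend t - p)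
    (hp : p ∉ range γ) : rootRatio γ p = r 1 / r 0 := by
  obtain ⟨q, hq, hqγ, hratio⟩ : ∃ q : ℝ → ℂ, Continuous q ∧ (∀ t, q t ^ 2 = γ.extend t - p) ∧
      rootRatio γ p = q 1 / q 0 :=
    Classical.epsilon_spec (p := fun c ↦ ∃ q : ℝ → ℂ, Continuous q ∧
      (∀ t, q t ^ 2 = γ.extend t - p) ∧ c = q 1 / q 0) ⟨_, r, hr, hrγ, rfl⟩
  have hr₀ (t : ℝ) : r t ≠ 0 := fun h ↦
    extend_sub_ne_zero hp t (by rw [← hrγ, h, zero_pow two_ne_zero])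
  rcases isPreconnected_univ.eq_or_eq_neg_of_sq_eq hq.continuousOn hr.continuousOn
    (fun t _ ↦ (hqγ t).trans (hrγ t).symm) (fun _ ↦ hr₀ _) with h | h
  · rw [hratio, h (mem_univ 1), h (mem_univ 0)]
  · rw [hratio, h (mem_univ 1), h (mem_univ 0), Pi.neg_apply, Pi.neg_apply, neg_div_neg_eq]

theorem rootRatio_sq (hp : p ∉ range γ) : rootRatio γ p ^ 2 = (b - p) / (a - p) := by
  obtain ⟨r, hr, hrγ⟩ := exists_continuous_pow_eq (g := fun t ↦ γ.extend t - p) (by fun_prop)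
    (extend_sub_ne_zero hp) two_ne_zero
  rw [rootRatio_eq_div hr hrγ hp, div_pow, hrγ, hrγ, γ.extend_one, γ.extend_zero]

theorem rootRatio_ne_zero (hp : p ∉ range γ) : rootRatio γ p ≠ 0 := by
  have hb : b - p ≠ 0 := by simpa using extend_sub_ne_zero hp 1
  have ha : a - p ≠ 0 := by simpa using extend_sub_ne_zero hp 0
  exact pow_ne_zero_iff two_ne_zero |>.1 (rootRatio_sq hp ▸ div_ne_zero hb ha)

theorem rootRatio_mul_rootRatio_of_disjoint (h : Disjoint (range γ) (range γ')) :
    rootRatio γ' a * rootRatio γ b' = rootRatio γ a' * rootRatio γ' b := by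
  have hne (s t : ℝ) : γ.extend s - γ'.extend t ≠ 0 :=
    sub_ne_zero.2 (h.ne_of_mem (γ.extend_range ▸ mem_range_self s)
      (γ'.extend_range ▸ mem_range_self t))
  obtain ⟨r, hr, hrγ⟩ := exists_continuous_pow_eq
    (g := fun x : ℝ × ℝ ↦ γ.extend x.1 - γ'.extend x.2) (by fun_prop) (fun x ↦ hne x.1 x.2)
    two_ne_zero
  have hr₀ (x : ℝ × ℝ) : r x ≠ 0 := fun hx ↦ hne x.1 x.2 (by rw [← hrγ, hx, zero_pow two_ne_zero])
  have along_fst (t : ℝ) : rootRatio γ (γ'.extend t) = r (1, t) / r (0, t) :=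
    rootRatio_eq_div (r := fun s ↦ r (s, t)) (by fun_prop) (fun s ↦ hrγ (s, t))
      (h.notMem_of_mem_right (γ'.extend_range ▸ mem_range_self t))
  have along_snd (s : ℝ) : rootRatio γ' (γ.extend s) = r (s, 1) / r (s, 0) := by
    rw [rootRatio_eq_div (r := fun t ↦ Complex.I * r (s, t)) (by fun_prop) (fun t ↦ by
        rw [mul_pow, Complex.I_sq, hrγ]; ring)
      (h.notMem_of_mem_left (γ.extend_range ▸ mem_range_self s)),
      mul_div_mul_left _ _ Complex.I_ne_zero]
  calc rootRatio γ' a * rootRatio γ b'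
      = r (0, 1) / r (0, 0) * (r (1, 1) / r (0, 1)) := by
        rw [← along_snd 0, ← along_fst 1, γ.extend_zero, γ'.extend_one]
    _ = r (1, 0) / r (0, 0) * (r (1, 1) / r (1, 0)) := by field_simp [hr₀]
    _ = rootRatio γ a' * rootRatio γ' b := by
        rw [← along_fst 0, ← along_snd 1, γ.extend_one, γ'.extend_zero]

end RootRatio

theorem prod_prod_compl_singleton_comm {ι M : Type*} [Fintype ι] [DecidableEq ι] [CommMonoid M]
    (f : ι → ι → M) : ∏ j, ∏ k ∈ {j}ᶜ, f j k = ∏ k, ∏ j ∈ {k}ᶜ, f j k :=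
  Finset.prod_comm' (by simp [eq_comm])

section Claw

variable {a a' : ℂ} {b : Fin 3 → ℂ}

/-- The weight of a claw (star `K₁,₃`) drawn in `ℂ` with centre `a`, leaves `b` and edges `γ`.
Its sign depends on the drawing in such a way that it has to differ between any two claws with
the same leaves and disjoint independent edges. -/
noncomputable def clawWeight (γ : ∀ j, Path a (b j)) : ℂ :=
  (∏ j, (b j - a)) * ∏ j, ∏ k ∈ {j}ᶜ, rootRatio (γ j) (b k)

theorem clawWeight_ne_zero {γ : ∀ j, Path a (b j)} (hab : ∀ j, b j ≠ a)
    (hγ : ∀ j k, j ≠ k → b k ∉ range (γ j)) : clawWeight γ ≠ 0 := by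
  refine mul_ne_zero (Finset.prod_ne_zero_iff.2 fun j _ ↦ sub_ne_zero.2 (hab j))
    (Finset.prod_ne_zero_iff.2 fun j _ ↦ Finset.prod_ne_zero_iff.2 fun k hk ↦ ?_)
  exact rootRatio_ne_zero (hγ j k (by simpa [eq_comm] using hk))

theorem clawWeight_eq_neg_of_disjoint {γ : ∀ j, Path a (b j)} {γ' : ∀ j, Path a' (b j)}
    (h : ∀ j k, j ≠ k → Disjoint (range (γ j)) (range (γ' k))) :
    clawWeight γ = -clawWeight γ' := by
  have haa' : a - a' ≠ 0 :=
    sub_ne_zero.2 ((h 0 1 (by decide)).ne_of_mem (γ 0).source_mem_range (γ' 1).source_mem_range)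
  have ha (k : Fin 3) : a ∉ range (γ' k) := by
    obtain ⟨j, hj⟩ := exists_ne k
    exact (h j k hj).notMem_of_mem_left (γ j).source_mem_range
  have ha' (j : Fin 3) : a' ∉ range (γ j) := by
    obtain ⟨k, hk⟩ := exists_ne j
    exact (h j k hk.symm).notMem_of_mem_right (γ' k).source_mem_range
  have exchange : (∏ j, ∏ k ∈ {j}ᶜ, rootRatio (γ' k) a) * ∏ j, ∏ k ∈ {j}ᶜ, rootRatio (γ j) (b k) =
      (∏ j, ∏ _k ∈ {j}ᶜ, rootRatio (γ j) a') * ∏ j, ∏ k ∈ {j}ᶜ, rootRatio (γ' k) (b j) := by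
    simp only [← Finset.prod_mul_distrib]
    exact Finset.prod_congr rfl fun j _ ↦ Finset.prod_congr rfl fun k hk ↦
      rootRatio_mul_rootRatio_of_disjoint (h j k (by simpa [eq_comm] using hk))
  rw [prod_prod_compl_singleton_comm fun _ k ↦ rootRatio (γ' k) a,
    prod_prod_compl_singleton_comm fun j k ↦ rootRatio (γ' k) (b j)] at exchange
  simp only [Finset.prod_const, Finset.card_compl, Finset.card_singleton, Fintype.card_fin,
    Nat.add_one_sub_one, rootRatio_sq (ha _), rootRatio_sq (ha' _),
    Finset.prod_div_distrib, Finset.card_univ] at exchange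
  rw [← neg_sub a a', Odd.neg_pow (by decide), div_neg, neg_mul, div_mul_eq_mul_div,
    div_mul_eq_mul_div, neg_eq_iff_eq_neg, ← neg_div,
    div_left_inj' (pow_ne_zero 3 haa')] at exchange
  exact exchange

theorem exists_not_disjoint_of_k33 {a b : Fin 3 → ℂ} (γ : ∀ i j, Path (a i) (b j)) :
    ∃ i i' j j', i ≠ i' ∧ j ≠ j' ∧ ¬ Disjoint (range (γ i j)) (range (γ i' j')) := by
  by_contra! h
  have weight_neg (i i' : Fin 3) (hi : i ≠ i') : clawWeight (γ i) = -clawWeight (γ i') :=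
    clawWeight_eq_neg_of_disjoint fun j j' ↦ h i i' j j' hi
  have weight_ne_zero : clawWeight (γ 0) ≠ 0 := by
    refine clawWeight_ne_zero (fun j ↦ ?_) fun j k hjk ↦ ?_
    · obtain ⟨k, hk⟩ := exists_ne j
      exact (h 1 0 j k (by decide) hk.symm).ne_of_mem
        (γ 1 j).target_mem_range (γ 0 k).source_mem_range
    · exact (h 0 1 j k (by decide) hjk).notMem_of_mem_right (γ 1 k).target_mem_range
  have weight_eq_neg_self : clawWeight (γ 0) = -clawWeight (γ 0) :=
    calc clawWeight (γ 0) = -clawWeight (γ 1) := weight_neg 0 1 (by decide)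
      _ = clawWeight (γ 2) := by rw [weight_neg 1 2 (by decide), neg_neg]
      _ = -clawWeight (γ 0) := weight_neg 2 0 (by decide)
  exact weight_ne_zero (self_eq_neg.1 weight_eq_neg_self)

end Claw

namespace ICDrawing

variable {V : Type*} {G : SimpleGraph V} (D : ICDrawing G) {u v x y w : V}

/-- The arc of the edge `uv` without its end points. -/
def openArc (u v : V) : Set (ℝ × ℝ) := D.arc u v '' Ioo 0 1

/-- `uv` and `xy` are distinct edges that cross, that is, whose arcs share an interior point. -/
structure Crosses_s9 (u v x y : V) : Prop where
  adj_left : G.Adj u v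
  adj_right : G.Adj x y
  edge_ne : s(u, v) ≠ s(x, y)
  nonempty_inter : (D.openArc u v ∩ D.openArc x y).Nonempty

theorem arc_one (h : G.Adj u v) : D.arc u v 1 = D.pos v := by
  rw [D.arc_symm, sub_self, D.arc_start v u h.symm]

/-- The arc of an edge as a `Path` between the positions of its ends. -/
def edgePath (h : G.Adj u v) : Path (D.pos u) (D.pos v) where
  toFun t := D.arc u v t
  continuous_toFun := (D.arc_cont u v h).domRestrict
  source' := D.arc_start u v h
  target' := D.arc_one h

theorem range_edgePath (h : G.Adj u v) :
    range (D.edgePath h) = D.openArc u v ∪ {D.pos u, D.pos v} := by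
  have range_eq_image : range (D.edgePath h) = D.arc u v '' Icc 0 1 := by
    rw [image_eq_range]; rfl
  rw [range_eq_image, ← Ioo_union_both zero_le_one, image_union, image_pair, D.arc_start u v h,
    D.arc_one h, openArc]

theorem pos_notMem_openArc (h : G.Adj u v) : D.pos w ∉ D.openArc u v := by
  rintro ⟨t, ht, hw⟩
  exact D.arc_avoid u v h t ht w hw

theorem crosses_of_not_disjoint (h : G.Adj u v) (h' : G.Adj x y)
    (hends : Disjoint ({u, v} : Set V) {x, y})
    (hmeet : ¬ Disjoint (range (D.edgePath h)) (range (D.edgePath h'))) : D.Crosses_s9 u v x y := by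
  have hedge : s(u, v) ≠ s(x, y) := fun h ↦
    hends.notMem_of_mem_left (mem_insert u {v}) (Sym2.mem_iff.1 (h ▸ Sym2.mem_mk_left u v))
  contrapose! hmeet
  have hpos : Disjoint ({D.pos u, D.pos v} : Set (ℝ × ℝ)) {D.pos x, D.pos y} := by
    simpa only [image_pair] using (disjoint_image_iff D.pos_inj).2 hends
  have hopen : Disjoint (D.openArc u v) (D.openArc x y) :=
    disjoint_iff_inter_eq_empty.2 (not_nonempty_iff_eq_empty.1 fun hne ↦ hmeet ⟨h, h', hedge, hne⟩)
  simp only [range_edgePath, disjoint_union_left, disjoint_union_right]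
  refine ⟨⟨hopen, ?_⟩, ?_, hpos⟩
  · simp [D.pos_notMem_openArc h']
  · simp [D.pos_notMem_openArc h]

theorem exists_crosses_of_completeBipartite {A B : Finset V} (hA : A.card = 3) (hB : B.card = 3)
    (hAB : ∀ a ∈ A, ∀ b ∈ B, G.Adj a b) :
    ∃ a ∈ A, ∃ b ∈ B, ∃ a' ∈ A, ∃ b' ∈ B, a ≠ a' ∧ b ≠ b' ∧ D.Crosses_s9 a b a' b' := by
  let α := (A.equivFinOfCardEq hA).symm
  let β := (B.equivFinOfCardEq hB).symm
  let φ := Complex.equivRealProdCLM.symm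
  have hadj (i j : Fin 3) : G.Adj (α i) (β j) := hAB _ (α i).2 _ (β j).2
  obtain ⟨i, i', j, j', hi, hj, hmeet⟩ := exists_not_disjoint_of_k33
    fun i j ↦ (D.edgePath (hadj i j)).map φ.continuous
  have hα : (α i : V) ≠ α i' := fun h ↦ hi (α.injective (Subtype.ext h))
  have hβ : (β j : V) ≠ β j' := fun h ↦ hj (β.injective (Subtype.ext h))
  refine ⟨α i, (α i).2, β j, (β j).2, α i', (α i').2, β j', (β j').2, hα, hβ,
    D.crosses_of_not_disjoint (hadj i j) (hadj i' j') ?_ ?_⟩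
  · simp [hα.symm, hβ.symm, (hadj i j').ne', (hadj i' j).ne]
  · simpa only [Path.map_coe, range_comp, disjoint_image_iff φ.injective] using hmeet

theorem exists_crosses_of_isNClique_six [DecidableEq V] {S A : Finset V} (hS : G.IsNClique 6 S)
    (hAS : A ⊆ S) (hA : A.card = 3) :
    ∃ a ∈ A, ∃ b ∈ S \ A, ∃ a' ∈ A, ∃ b' ∈ S \ A, a ≠ a' ∧ b ≠ b' ∧ D.Crosses_s9 a b a' b' := by
  have hSA : (S \ A).card = 3 := by rw [Finset.card_sdiff_of_subset hAS, hS.card_eq, hA]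
  refine D.exists_crosses_of_completeBipartite hA hSA fun a ha b hb ↦ ?_
  obtain ⟨hbS, hbA⟩ := Finset.mem_sdiff.1 hb
  exact hS.isClique (hAS ha) hbS (ne_of_mem_of_not_mem ha hbA)

variable {D}

theorem Crosses_s9.edges_eq_of_mem_clusters {u' v' x' y' : V} (h : D.Crosses_s9 u v x y)
    (h' : D.Crosses_s9 u' v' x' y') (hw : w ∈ ({u, v, x, y} : Set V))
    (hw' : w ∈ ({u', v', x', y'} : Set V)) :
    ({s(u, v), s(x, y)} : Set (Sym2 V)) = {s(u', v'), s(x', y')} := by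
  by_contra hdiff
  have hempty := D.ic u v x y u' v' x' y' h.adj_left h.adj_right h'.adj_left h'.adj_right
    h.edge_ne h'.edge_ne h.nonempty_inter h'.nonempty_inter hdiff
  exact hempty.subset ⟨hw, hw'⟩

end ICDrawing

theorem ICDrawing.cliqueFree_six {V : Type*} {G : SimpleGraph V} (D : ICDrawing G) :
    G.CliqueFree 6 := by
  classical
  intro S hS
  obtain ⟨A₀, hA₀S, hA₀⟩ := Finset.exists_subset_card_eq (hS.card_eq.symm ▸ show 3 ≤ 6 by decide)
  obtain ⟨a, ha, b, hb, a', -, b', -, -, -, hcross₀⟩ :=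
    D.exists_crosses_of_isNClique_six hS hA₀S hA₀
  have card_ab : ({a, b} : Finset V).card = 2 := Finset.card_pair hcross₀.adj_left.ne
  have habS : {a, b} ⊆ S :=
    Finset.insert_subset (hA₀S ha) (Finset.singleton_subset_iff.2 (Finset.sdiff_subset hb))
  obtain ⟨A, habA, hAS, hA⟩ := Finset.exists_subsuperset_card_eq (n := 3) habS
    (by rw [card_ab]; decide) (by rw [hS.card_eq]; decide)
  obtain ⟨c, hc, d, hd, c', hc', d', hd', hcc', -, hcross⟩ :=
    D.exists_crosses_of_isNClique_six hS hAS hA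
  obtain ⟨w, hw⟩ : ({a, b} ∩ {c, c'} : Finset V).Nonempty :=
    Finset.inter_nonempty_of_card_lt_card_add_card habA
      (Finset.insert_subset hc (Finset.singleton_subset_iff.2 hc'))
      (by rw [card_ab, Finset.card_pair hcc', hA]; decide)
  have same_edges : ({s(a, b), s(a', b')} : Set (Sym2 V)) = {s(c, d), s(c', d')} :=
    hcross₀.edges_eq_of_mem_clusters hcross (w := w) (by grind) (by grind)
  have ab_ne {u v : V} (hv : v ∈ S \ A) : s(a, b) ≠ s(u, v) := fun h ↦ by
    have hvab : v ∈ s(a, b) := h ▸ Sym2.mem_mk_right u v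
    exact (Finset.mem_sdiff.1 hv).2 (habA (by simpa using hvab))
  exact (same_edges.subset (mem_insert _ _)).elim (ab_ne hd) (ab_ne hd')

theorem exists_not_adj_of_cliqueFree {V : Type*} {G : SimpleGraph V} {n : ℕ}
    (hG : G.CliqueFree (n + 1)) (z : V) (S : Finset V) [DecidablePred (G.Adj z)]
    (hS : n ≤ (S.filter (G.Adj z)).card) :
    ∃ a ∈ S, ∃ b ∈ S, G.Adj z a ∧ G.Adj z b ∧ a ≠ b ∧ ¬ G.Adj a b := by
  classical
  by_contra! hadj
  obtain ⟨T, hTS, hT⟩ := Finset.exists_subset_card_eq hS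
  have hTz (a : V) (ha : a ∈ T) : a ∈ S ∧ G.Adj z a := Finset.mem_filter.1 (hTS ha)
  have hclique : G.IsNClique n T := ⟨fun a ha b hb hab ↦
    hadj a (hTz a ha).1 b (hTz b hb).1 (hTz a ha).2 (hTz b hb).2 hab, hT⟩
  exact hG _ (hclique.insert fun a ha ↦ (hTz a ha).2)

/-- $K_6$ is not IC-planar; hence in any IC-plane graph, every vertex with at least 5
pairwise adjacent neighbors would induce a $K_6$, which is impossible, so every vertex
with at least 5 neighbors in a set $S$ has two nonadjacent neighbors in $S$. -/
theorem k6_not_ic_planar_and_nonadjacent_neighbors :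
    ¬ (⊤ : SimpleGraph (Fin 6)).ICPlanar ∧
    ∀ {V : Type} [DecidableEq V] (G : SimpleGraph V), G.ICPlanar →
      ∀ (z : V) (S : Finset V) [DecidableRel G.Adj],
        5 ≤ (S.filter (fun a => G.Adj z a)).card →
        ∃ a ∈ S, ∃ b ∈ S, G.Adj z a ∧ G.Adj z b ∧ a ≠ b ∧ ¬ G.Adj a b := by
  constructor
  · rintro ⟨D⟩
    exact SimpleGraph.IsContained.not_cliqueFree .rfl D.cliqueFree_six
  · rintro V _ G ⟨D⟩ z S _ hS
    exact exists_not_adj_of_cliqueFree D.cliqueFree_six z S hS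
end
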